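/- arXiv:1112.6361 — 8 statements merged into one kernel-verified Lean document; each statement's English description precedes it below -/
import Mathlib

section
/- Let X and X' be two legal allocation matrices in the divisible multi-slot setting with m = Σ_{i∈I} κ_i (so both have column sums 1 and row sums κ_i), and let h and l be defined with respect to X. Let T ⊆ I be a set of bidders that is swap-closed: whenever a ∈ T and b ∈ I satisfy h(b) > l(a), then b ∈ T. Then the total weighted capacity of T cannot increase when passing from X to X': Σ_{i∈T} Σ_{j∈J} α_j (x'_{i,j} − x_{i,j}) ≤ 0. -/
/-!
Divisible multi-slot setting.  STATEMENT 3: for two legal allocation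
matrices `X, X'` (column sums `1`, row sums `κ_i`) and a swap-closed set
`T` of bidders (closed w.r.t. `h, l` defined from `X`), the total
weighted capacity of `T` cannot increase when passing from `X` to `X'`.
-/

open Finset

/-- A legal allocation matrix: nonnegative, row sums `κ_i`, column sums `1`. -/
def LegalMatrix (n m : ℕ) (κ : Fin n → ℕ) (X : Fin n → ℕ → ℝ) : Prop :=
  (∀ i j, j < m → 0 ≤ X i j) ∧
  (∀ i, ∑ j ∈ Finset.range m, X i j = (κ i : ℝ)) ∧
  (∀ j, j < m → ∑ i, X i j = 1)

/-- `l(i)`: the (index of the) lowest-quality slot assigned to bidder `i`. -/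
noncomputable def lSlot (m : ℕ) {n : ℕ} (X : Fin n → ℕ → ℝ) (i : Fin n) : ℕ :=
  sInf {j | j < m ∧ 0 < X i j}

/-- `h'(i)`: the (index of the) highest-quality slot assigned to bidder `i`. -/
noncomputable def hSlot' (m : ℕ) {n : ℕ} (X : Fin n → ℕ → ℝ) (i : Fin n) : ℕ :=
  sSup {j | j < m ∧ 0 < X i j}

/-- `h(i) = min { j : α_j = α_{h'(i)} }`. -/
noncomputable def hSlot (m : ℕ) (α : ℕ → ℝ) {n : ℕ}
    (X : Fin n → ℕ → ℝ) (i : Fin n) : ℕ :=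
  sInf {j | j < m ∧ α j = α (hSlot' m X i)}

/-!
Let `c` be the smallest quality `α (l(a))` over `a ∈ T`. Under `X`, the members of `T` only hold
slots of quality at least `c`, and swap-closedness says that the other bidders only hold slots of
quality at most `c`. So `T` owns every slot of quality above `c` and no part of a slot of quality
below `c`, while its total demand is fixed: by the bathtub principle no other allocation gives `T`
more.
-/

section Bathtub

variable {J R : Type*} [Ring R] [LinearOrder R] [IsOrderedRing R]

theorem sum_mul_le_sum_mul_of_threshold {s : Finset J} {α y y' : J → R} {c : R}
    (hsum : ∑ j ∈ s, y' j = ∑ j ∈ s, y j)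
    (hbelow : ∀ j ∈ s, α j < c → y j ≤ y' j) (habove : ∀ j ∈ s, c < α j → y' j ≤ y j) :
    ∑ j ∈ s, α j * y' j ≤ ∑ j ∈ s, α j * y j := by
  have hshift : ∑ j ∈ s, (α j - c) * y' j ≤ ∑ j ∈ s, (α j - c) * y j := by
    refine sum_le_sum fun j hj => ?_
    rcases lt_trichotomy (α j) c with hlt | heq | hgt
    · exact mul_le_mul_of_nonpos_left (hbelow j hj hlt) (sub_nonpos.mpr hlt.le)
    · simp only [heq, sub_self, zero_mul, le_refl]
    · exact mul_le_mul_of_nonneg_left (habove j hj hgt) (sub_nonneg.mpr hgt.le)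
  simpa only [sub_mul, sum_sub_distrib, ← mul_sum, hsum, sub_le_sub_iff_right] using hshift

end Bathtub

namespace LegalMatrix

variable {n m j : ℕ} {κ : Fin n → ℕ} {X : Fin n → ℕ → ℝ} {T : Finset (Fin n)}

theorem sum_sum_eq_sum_demand (hX : LegalMatrix n m κ X) (T : Finset (Fin n)) :
    ∑ j ∈ range m, ∑ i ∈ T, X i j = ∑ i ∈ T, (κ i : ℝ) := by
  rw [sum_comm]
  exact sum_congr rfl fun i _ => hX.2.1 i

theorem sum_share_nonneg (hX : LegalMatrix n m κ X) (T : Finset (Fin n)) (hj : j < m) :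
    0 ≤ ∑ i ∈ T, X i j :=
  sum_nonneg fun i _ => hX.1 i j hj

theorem sum_share_eq_zero (hX : LegalMatrix n m κ X) (hj : j < m)
    (hT : ∀ i ∈ T, ¬ 0 < X i j) : ∑ i ∈ T, X i j = 0 :=
  sum_eq_zero fun i hi => le_antisymm (not_lt.mp (hT i hi)) (hX.1 i j hj)

theorem sum_share_add_sum_share_compl (hX : LegalMatrix n m κ X) (T : Finset (Fin n))
    (hj : j < m) : ∑ i ∈ T, X i j + ∑ i ∈ Tᶜ, X i j = 1 :=
  (sum_add_sum_compl T fun i => X i j).trans (hX.2.2 j hj)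

theorem sum_share_le_one (hX : LegalMatrix n m κ X) (T : Finset (Fin n)) (hj : j < m) :
    ∑ i ∈ T, X i j ≤ 1 := by
  linarith [hX.sum_share_add_sum_share_compl T hj, hX.sum_share_nonneg Tᶜ hj]

theorem sum_share_eq_one (hX : LegalMatrix n m κ X) (hj : j < m)
    (hT : ∀ i ∉ T, ¬ 0 < X i j) : ∑ i ∈ T, X i j = 1 := by
  have hcompl : ∑ i ∈ Tᶜ, X i j = 0 :=
    hX.sum_share_eq_zero hj fun i hi => hT i (mem_compl.mp hi)
  simpa only [hcompl, add_zero] using hX.sum_share_add_sum_share_compl T hj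

theorem sum_capacity_le_of_threshold {κ' : Fin n → ℕ} {X' : Fin n → ℕ → ℝ} {α : ℕ → ℝ} {c : ℝ}
    (hX : LegalMatrix n m κ X) (hX' : LegalMatrix n m κ' X')
    (hκ : ∑ i ∈ T, (κ' i : ℝ) = ∑ i ∈ T, (κ i : ℝ))
    (hmem : ∀ i ∈ T, ∀ j < m, 0 < X i j → c ≤ α j)
    (hnotMem : ∀ i ∉ T, ∀ j < m, 0 < X i j → α j ≤ c) :
    ∑ i ∈ T, ∑ j ∈ range m, α j * X' i j ≤ ∑ i ∈ T, ∑ j ∈ range m, α j * X i j := by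
  rw [sum_comm, sum_comm (s := T)]
  simp only [← mul_sum]
  refine sum_mul_le_sum_mul_of_threshold (c := c) ?_ ?_ ?_
  · rw [hX'.sum_sum_eq_sum_demand, hX.sum_sum_eq_sum_demand, hκ]
  · intro j hj hlt
    rw [mem_range] at hj
    rw [hX.sum_share_eq_zero hj fun i hi hpos => hlt.not_ge (hmem i hi j hj hpos)]
    exact hX'.sum_share_nonneg T hj
  · intro j hj hgt
    rw [mem_range] at hj
    rw [hX.sum_share_eq_one hj fun i hi hpos => hgt.not_ge (hnotMem i hi j hj hpos)]
    exact hX'.sum_share_le_one T hj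

end LegalMatrix

section Slots

variable {n m j : ℕ} {α : ℕ → ℝ} {X : Fin n → ℕ → ℝ} {i : Fin n}

theorem lSlot_le (hj : j < m) (hpos : 0 < X i j) : lSlot m X i ≤ j :=
  Nat.sInf_le ⟨hj, hpos⟩

-- For a bidder holding no slot, `lSlot` is the junk value `sInf ∅ = 0`, which still indexes a slot.
theorem lSlot_lt (hm : 0 < m) : lSlot m X i < m := by
  rcases Set.eq_empty_or_nonempty {j | j < m ∧ 0 < X i j} with hempty | hne
  · simpa only [lSlot, hempty, Nat.sInf_empty] using hm
  · exact (Nat.sInf_mem hne).1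

theorem bddAbove_heldSlots : BddAbove {j | j < m ∧ 0 < X i j} :=
  ⟨m, fun _ hk => hk.1.le⟩

theorem le_hSlot' (hj : j < m) (hpos : 0 < X i j) : j ≤ hSlot' m X i :=
  le_csSup bddAbove_heldSlots ⟨hj, hpos⟩

theorem hSlot'_lt (hj : j < m) (hpos : 0 < X i j) : hSlot' m X i < m :=
  (Nat.sSup_mem (s := {k | k < m ∧ 0 < X i k}) ⟨j, hj, hpos⟩ bddAbove_heldSlots).1

theorem hSlot_mem (hj : j < m) (hpos : 0 < X i j) :
    hSlot m α X i ∈ {k | k < m ∧ α k = α (hSlot' m X i)} :=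
  Nat.sInf_mem ⟨hSlot' m X i, hSlot'_lt hj hpos, rfl⟩

theorem quality_le_quality_hSlot (hα : MonotoneOn α (Set.Iio m)) (hj : j < m)
    (hpos : 0 < X i j) : α j ≤ α (hSlot m α X i) :=
  (hα hj (hSlot'_lt hj hpos) (le_hSlot' hj hpos)).trans_eq (hSlot_mem hj hpos).2.symm

theorem exists_threshold_of_swapClosed {T : Finset (Fin n)} (hα : MonotoneOn α (Set.Iio m))
    (hne : T.Nonempty) (hT : ∀ a ∈ T, ∀ b, lSlot m X a < hSlot m α X b → b ∈ T) :
    ∃ c, (∀ i ∈ T, ∀ j < m, 0 < X i j → c ≤ α j) ∧ ∀ i ∉ T, ∀ j < m, 0 < X i j → α j ≤ c := by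
  obtain ⟨a, haT, hmin⟩ := T.exists_min_image (lSlot m X) hne
  refine ⟨α (lSlot m X a), fun i hi j hj hpos => ?_, fun b hb j hj hpos => ?_⟩
  · exact hα (lSlot_lt (Nat.zero_lt_of_lt hj)) hj ((hmin i hi).trans (lSlot_le hj hpos))
  · have hle : hSlot m α X b ≤ lSlot m X a := not_lt.mp (mt (hT a haT b) hb)
    calc α j ≤ α (hSlot m α X b) := quality_le_quality_hSlot hα hj hpos
      _ ≤ α (lSlot m X a) := hα (hSlot_mem hj hpos).1 (lSlot_lt (Nat.zero_lt_of_lt hj)) hle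

end Slots

theorem stmt3_general {n m : ℕ} {κ : Fin n → ℕ} {α : ℕ → ℝ} (hα : MonotoneOn α (Set.Iio m))
    {X X' : Fin n → ℕ → ℝ} (hX : LegalMatrix n m κ X) (hX' : LegalMatrix n m κ X')
    {T : Finset (Fin n)} (hT : ∀ a ∈ T, ∀ b, lSlot m X a < hSlot m α X b → b ∈ T) :
    ∑ i ∈ T, ∑ j ∈ range m, α j * (X' i j - X i j) ≤ 0 := by
  rcases T.eq_empty_or_nonempty with rfl | hne
  · exact sum_empty.le
  obtain ⟨c, hmem, hnotMem⟩ := exists_threshold_of_swapClosed hα hne hT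
  simpa only [mul_sub, sum_sub_distrib, sub_nonpos] using
    hX.sum_capacity_le_of_threshold hX' rfl hmem hnotMem

/-- if `T` is swap-closed (whenever `a ∈ T` and
`h(b) > l(a)` then `b ∈ T`), then
`Σ_{i∈T} Σ_j α_j (x'_{i,j} − x_{i,j}) ≤ 0`. -/
theorem stmt3 {n m : ℕ} (κ : Fin n → ℕ) (hκ : ∀ i, 1 ≤ κ i)
    (hm : m = ∑ i, κ i)
    (α : ℕ → ℝ) (hα0 : ∀ j, 0 ≤ α j) (hαmono : Monotone α)
    (X X' : Fin n → ℕ → ℝ)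
    (hX : LegalMatrix n m κ X) (hX' : LegalMatrix n m κ X')
    (T : Finset (Fin n))
    (hT : ∀ a ∈ T, ∀ b : Fin n, lSlot m X a < hSlot m α X b → b ∈ T) :
    ∑ i ∈ T, ∑ j ∈ Finset.range m, α j * (X' i j - X i j) ≤ 0 :=
  stmt3_general (hαmono.monotoneOn _) hX hX' hT
end

section
/- For every probability distribution with finite support over legal indivisible allocations there exists a legal divisible allocation (X,p) such that the utility of every bidder and the utility of the auctioneer under (X,p) equal the corresponding expected utilities under the probability distribution. -/
/-!
STATEMENT 6: for every finitely supported probability distribution over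
legal indivisible allocations there exists a legal divisible allocation
whose bidder utilities and auctioneer utility equal the corresponding
expected utilities under the distribution.

Bidders are `Fin n`, slots are `Fin m` with qualities `α`, rounds form a
finite nonempty type `R`.  An indivisible allocation assigns every slot
of every round to a bidder via `N : Fin m → R → Fin n`.
-/

open Finset

/-- Legality of an indivisible allocation `(N, p)`. -/
def LegalIndiv {n m : ℕ} {R : Type*} [Fintype R]
    (κ : Fin n → ℕ) (b : Fin n → ℝ)
    (N : Fin m → R → Fin n) (p : Fin n → ℝ) : Prop :=
  (∀ (i : Fin n) (r : R), ((univ.filter fun j : Fin m => N j r = i).card) ≤ κ i) ∧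
  (∀ i, p i ≤ b i)

/-- Weighted capacity of bidder `i` under the indivisible allocation `N`:
`c_i = Σ_{j} (α_j / |R|) · |{r : N(j,r) = i}|`. -/
noncomputable def capIndiv {n m : ℕ} {R : Type*} [Fintype R] (α : Fin m → ℝ)
    (N : Fin m → R → Fin n) (i : Fin n) : ℝ :=
  ∑ j, (α j / (Fintype.card R : ℝ)) *
    ((univ.filter fun r : R => N j r = i).card : ℝ)

/-- Legality of a divisible allocation `(X, p)`. -/
def LegalDiv {n m : ℕ} (κ : Fin n → ℕ) (b : Fin n → ℝ)
    (X : Fin n → Fin m → ℝ) (p : Fin n → ℝ) : Prop :=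
  (∀ i j, 0 ≤ X i j) ∧
  (∀ i, ∑ j, X i j ≤ (κ i : ℝ)) ∧
  (∀ j, ∑ i, X i j = 1) ∧
  (∀ i, p i ≤ b i)

/-
Giving each bidder the fraction of the rounds in which he holds a slot turns a legal indivisible
allocation into a legal divisible one with the same weighted capacities and payments. Legal
divisible allocations form a convex set on which all utilities are linear, so the mean of these
divisible allocations under the distribution is legal and its utilities are the expected ones. It
depends neither on the qualities nor on the valuations.
-/

section SlotShare

variable {I J R : Type*} [DecidableEq I] [Fintype R]

/-- The fraction of the rounds in which slot `j` goes to bidder `i`: the divisible assignment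
associated with the indivisible assignment `N`. The junk value is `0` when there are no rounds. -/
noncomputable def slotShare (N : J → R → I) (i : I) (j : J) : ℝ :=
  #{r | N j r = i} / Fintype.card R

lemma slotShare_nonneg (N : J → R → I) (i : I) (j : J) : 0 ≤ slotShare N i j := by
  unfold slotShare
  positivity

lemma sum_slotShare_eq_one [Fintype I] [Nonempty R] (N : J → R → I) (j : J) :
    ∑ i, slotShare N i j = 1 := by
  have card_rounds : ∑ i, #{r | N j r = i} = Fintype.card R :=
    (card_eq_sum_card_fiberwise fun r _ ↦ mem_univ (N j r)).symm
  simp only [slotShare]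
  rw [← sum_div, ← Nat.cast_sum, card_rounds, div_self (by simp)]

lemma sum_slotShare_le_of_card_le [Fintype J] {N : J → R → I} {i : I} {k : ℕ}
    (hN : ∀ r, #{j | N j r = i} ≤ k) : ∑ j, slotShare N i j ≤ k := by
  have card_pairs : ∑ j, #{r | N j r = i} ≤ k * Fintype.card R :=
    calc ∑ j, #{r | N j r = i} = ∑ r, #{j | N j r = i} :=
          sum_card_bipartiteAbove_eq_sum_card_bipartiteBelow fun j r ↦ N j r = i
      _ ≤ ∑ _r : R, k := sum_le_sum fun r _ ↦ hN r
      _ = k * Fintype.card R := by simp [mul_comm]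
  simp only [slotShare]
  rw [← sum_div, ← Nat.cast_sum]
  exact div_le_of_le_mul₀ (by positivity) (by positivity) (by exact_mod_cast card_pairs)

end SlotShare

lemma capIndiv_eq_sum_slotShare {n m : ℕ} {R : Type*} [Fintype R] (α : Fin m → ℝ)
    (N : Fin m → R → Fin n) (i : Fin n) :
    capIndiv α N i = ∑ j, α j * slotShare N i j := by
  simp only [capIndiv, slotShare, div_mul_eq_mul_div, mul_div_assoc]

lemma LegalIndiv.legalDiv_slotShare {n m : ℕ} {R : Type*} [Fintype R] [Nonempty R]
    {κ : Fin n → ℕ} {b : Fin n → ℝ} {N : Fin m → R → Fin n} {p : Fin n → ℝ}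
    (h : LegalIndiv κ b N p) : LegalDiv κ b (slotShare N) p :=
  ⟨slotShare_nonneg N, fun i ↦ sum_slotShare_le_of_card_le (h.1 i), sum_slotShare_eq_one N, h.2⟩

lemma convex_setOf_legalDiv {n m : ℕ} (κ : Fin n → ℕ) (b : Fin n → ℝ) :
    Convex ℝ {A : (Fin n → Fin m → ℝ) × (Fin n → ℝ) | LegalDiv κ b A.1 A.2} := by
  rintro ⟨X, p⟩ ⟨hX_nonneg, hX_demand, hX_slot, hp⟩ ⟨Y, q⟩ ⟨hY_nonneg, hY_demand, hY_slot, hq⟩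
    s t hs ht hst
  refine ⟨fun i j ↦ ?_, fun i ↦ ?_, fun j ↦ ?_, fun i ↦ ?_⟩
  · exact convex_Ici (0 : ℝ) (hX_nonneg i j) (hY_nonneg i j) hs ht hst
  · simpa [sum_add_distrib, mul_sum] using
      convex_Iic (κ i : ℝ) (hX_demand i) (hY_demand i) hs ht hst
  · simpa [sum_add_distrib, mul_sum] using
      convex_singleton (1 : ℝ) (hX_slot j) (hY_slot j) hs ht hst
  · exact convex_Iic (b i) (hp i) (hq i) hs ht hst

section Utility

variable {I J : Type*}

/-- The utility of bidder `i` as a linear functional of the divisible allocation `(X, p)`. -/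
def bidderUtility [Fintype J] (α : J → ℝ) (v : I → ℝ) (i : I) :
    (I → J → ℝ) × (I → ℝ) →ₗ[ℝ] ℝ where
  toFun A := (∑ j, α j * A.1 i j) * v i - A.2 i
  map_add' A B := by
    simp only [Prod.fst_add, Prod.snd_add, Pi.add_apply, mul_add, sum_add_distrib]
    ring
  map_smul' c A := by
    simp only [Prod.smul_fst, Prod.smul_snd, Pi.smul_apply, smul_eq_mul, mul_left_comm _ c,
      ← mul_sum, RingHom.id_apply]
    ring

/-- The utility of the auctioneer as a linear functional of the divisible allocation `(X, p)`. -/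
def auctioneerUtility [Fintype I] : (I → J → ℝ) × (I → ℝ) →ₗ[ℝ] ℝ where
  toFun A := ∑ i, A.2 i
  map_add' _ _ := sum_add_distrib
  map_smul' c _ := (mul_sum _ _ c).symm

end Utility

lemma bidderUtility_slotShare {n m : ℕ} {R : Type*} [Fintype R] (α : Fin m → ℝ) (v : Fin n → ℝ)
    (N : Fin m → R → Fin n) (p : Fin n → ℝ) (i : Fin n) :
    bidderUtility α v i (slotShare N, p) = capIndiv α N i * v i - p i := by
  rw [capIndiv_eq_sum_slotShare]
  rfl

theorem stmt6_general {n m : ℕ} {R : Type*} [Fintype R] [Nonempty R]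
    (κ : Fin n → ℕ) (b : Fin n → ℝ)
    {K : Type*} [Fintype K] (μ : K → ℝ)
    (hμ0 : ∀ k, 0 ≤ μ k) (hμ1 : ∑ k, μ k = 1)
    (N : K → Fin m → R → Fin n) (P : K → Fin n → ℝ)
    (hleg : ∀ k, LegalIndiv κ b (N k) (P k)) :
    ∃ (X : Fin n → Fin m → ℝ) (p : Fin n → ℝ),
      LegalDiv κ b X p ∧
      (∀ (α : Fin m → ℝ) (v : Fin n → ℝ) (i : Fin n), (∑ j, α j * X i j) * v i - p i =
        ∑ k, μ k * (capIndiv α (N k) i * v i - P k i)) ∧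
      (∑ i, p i = ∑ k, μ k * ∑ i, P k i) := by
  let A (k : K) : (Fin n → Fin m → ℝ) × (Fin n → ℝ) := (slotShare (N k), P k)
  let mean := ∑ k, μ k • A k
  have map_mean (f : (Fin n → Fin m → ℝ) × (Fin n → ℝ) →ₗ[ℝ] ℝ) :
      f mean = ∑ k, μ k * f (A k) := by
    simp only [mean, map_sum, map_smul, smul_eq_mul]
  refine ⟨mean.1, mean.2, ?_, fun α v i ↦ ?_, map_mean auctioneerUtility⟩
  · exact (convex_setOf_legalDiv κ b).sum_mem (fun k _ ↦ hμ0 k) hμ1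
      fun k _ ↦ (hleg k).legalDiv_slotShare
  · exact (map_mean (bidderUtility α v i)).trans <| sum_congr rfl fun k _ ↦
      congrArg (μ k * ·) (bidderUtility_slotShare α v (N k) (P k) i)

theorem stmt6 {n m : ℕ} {R : Type*} [Fintype R] [Nonempty R]
    (κ : Fin n → ℕ) (hκ : ∀ i, 1 ≤ κ i)
    (α : Fin m → ℝ) (hα : ∀ j, 0 ≤ α j)
    (v b : Fin n → ℝ) (hv : ∀ i, 0 ≤ v i)
    -- a probability distribution with finite support, indexed by `K`
    {K : Type*} [Fintype K] (μ : K → ℝ)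
    (hμ0 : ∀ k, 0 ≤ μ k) (hμ1 : ∑ k, μ k = 1)
    (N : K → Fin m → R → Fin n) (P : K → Fin n → ℝ)
    (hleg : ∀ k, LegalIndiv κ b (N k) (P k)) :
    ∃ (X : Fin n → Fin m → ℝ) (p : Fin n → ℝ),
      LegalDiv κ b X p ∧
      (∀ i, (∑ j, α j * X i j) * v i - p i =
        ∑ k, μ k * (capIndiv α (N k) i * v i - P k i)) ∧
      (∑ i, p i = ∑ k, μ k * ∑ i, P k i) := by
  obtain ⟨X, p, hlegal, hbidder, hauctioneer⟩ := stmt6_general κ b μ hμ0 hμ1 N P hleg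
  exact ⟨X, p, hlegal, hbidder α v, hauctioneer⟩
end

section
/- Let J, C, I be finite nonempty sets and let M : J × C → I be a matrix (rows indexed by J, columns indexed by C, entries valued in I) such that every value i ∈ I appears in at most |C| entries of M. Then there exists a matrix M' : J × C → I such that (1) every value appears in each row of M' exactly as often as in the corresponding row of M, i.e., |{c ∈ C : M'(j,c) = i}| = |{c ∈ C : M(j,c) = i}| for all j ∈ J and i ∈ I, and (2) every value appears in at most one entry of each column of M', i.e., for every c ∈ C the map j ↦ M'(j,c) is injective. -/
/-!
STATEMENT 8: given a matrix `M : J → C → I` (rows `J`, columns `C`,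
entries in `I`) in which every value `i ∈ I` appears in at most `|C|`
entries, there is a matrix `M'` with the same row multisets as `M` in
which every value appears at most once in each column.
-/

open Finset

/-!
The entries of `M` are the edges of a bipartite multigraph, the entry `(j, c)` joining the row `j`
to the value `M j c`, and all degrees are at most `|C|`. By König's edge-colouring theorem the edges
can be coloured by `C` so that edges with a common endpoint get different colours. The colouring is
then a permutation of `C` on each row, and moving every entry to the column given by its colour
produces `M'`.

König's theorem is proved by colouring one edge `e` at a time. Some colour `a` is missing at one end
of `e` and some colour `b` at the other. Exchanging `a` and `b` along the alternating chain that
starts at the first end makes `b` missing at both ends: the chain enters vertices on the other side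
only along edges of colour `b`, so it never reaches the second end. Infinite edge sets are handled
by compactness.
-/

section EdgeColoring

variable {E U V W K : Type*} {s : E → U} {t : E → V} {S : Set E} {κ : E → K} {a b : K}

/-- `κ` is a proper colouring of the edges in `S` of a bipartite multigraph: edges with a common
endpoint get different colours. The multigraph is encoded by its edge type `E` and the maps
`s : E → U` and `t : E → V` sending an edge to its endpoint on either side. -/
structure IsEdgeColoringOn (s : E → U) (t : E → V) (S : Set E) (κ : E → K) : Prop where
  injOn_left : S.InjOn fun e ↦ (s e, κ e)
  injOn_right : S.InjOn fun e ↦ (t e, κ e)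

/-- The colour `a` is missing at the vertex `w`: no edge in `S` at `w` has colour `a`. Here
`p : E → W` is the endpoint map of the side on which `w` lies. -/
def IsMissingAt (p : E → W) (S : Set E) (κ : E → K) (a : K) (w : W) : Prop :=
  ∀ e ∈ S, p e = w → κ e ≠ a

theorem exists_isMissingAt [Finite K] {p : E → W} {e : E} (κ : E → K)
    (hdeg : {f | p f = p e}.encard ≤ ENat.card K) (he : e ∉ S) :
    ∃ a, IsMissingAt p S κ a (p e) := by
  by_contra! hall
  have hsurj : κ '' {f ∈ S | p f = p e} = Set.univ := by
    refine Set.eq_univ_of_forall fun a ↦ ?_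
    simpa [IsMissingAt, and_assoc] using hall a
  have hfin : {f | p f = p e}.Finite := by
    rw [← Set.encard_lt_top_iff]
    exact hdeg.trans_lt ENat.card_lt_top_of_finite
  have hssub : {f ∈ S | p f = p e} ⊂ {f | p f = p e} :=
    ⟨fun f hf ↦ hf.2, fun h ↦ he (h (rfl : p e = p e)).1⟩
  have hlt := calc
    ENat.card K = (κ '' {f ∈ S | p f = p e}).encard := by rw [hsurj, Set.encard_univ]
    _ ≤ {f ∈ S | p f = p e}.encard := Set.encard_image_le _ _
    _ < {f | p f = p e}.encard := (hfin.subset hssub.subset).encard_lt_encard hssub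
    _ ≤ ENat.card K := hdeg
  exact hlt.false

theorem injOn_insert_update [DecidableEq E] {p : E → W} {e : E} (he : e ∉ S)
    (hinj : S.InjOn fun f ↦ (p f, κ f)) (hb : IsMissingAt p S κ b (p e)) :
    (insert e S).InjOn fun f ↦ (p f, Function.update κ e b f) := by
  have hold : S.EqOn (fun f ↦ (p f, κ f)) fun f ↦ (p f, Function.update κ e b f) := by
    intro f hf
    simp [ne_of_mem_of_not_mem hf he]
  refine (Set.injOn_insert he).2 ⟨hold.injOn_iff.1 hinj, ?_⟩
  rintro ⟨f, hf, hfe⟩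
  simp only [Function.update_self, Function.update_of_ne (ne_of_mem_of_not_mem hf he),
    Prod.mk.injEq] at hfe
  exact hb f hf hfe.1 hfe.2

theorem IsEdgeColoringOn.insert_update [DecidableEq E] {e : E} (he : e ∉ S)
    (hκ : IsEdgeColoringOn s t S κ) (hs : IsMissingAt s S κ b (s e))
    (ht : IsMissingAt t S κ b (t e)) :
    IsEdgeColoringOn s t (insert e S) (Function.update κ e b) :=
  ⟨injOn_insert_update he hκ.injOn_left hs, injOn_insert_update he hκ.injOn_right ht⟩

/-- The left vertices of the Kempe chain at `u`, i.e. those reached from `u` by paths whose edges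
are alternately coloured `b` (when leaving a left vertex) and `a` (when leaving a right vertex). -/
def InKempeChain (s : E → U) (t : E → V) (S : Set E) (κ : E → K) (a b : K) (u : U) : U → Prop :=
  Relation.ReflTransGen
    (fun x y ↦ ∃ e ∈ S, ∃ f ∈ S, s e = x ∧ κ e = b ∧ t e = t f ∧ κ f = a ∧ s f = y) u

open Classical in
/-- The colouring obtained from `κ` by exchanging `a` and `b` along the Kempe chain at `u`. -/
noncomputable def kempeSwap (s : E → U) (t : E → V) (S : Set E) (κ : E → K) (a b : K) (u : U)
    (e : E) : K :=
  if InKempeChain s t S κ a b u (s e) then Equiv.swap a b (κ e) else κ e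

variable {u : U} {v : V}

theorem IsEdgeColoringOn.exists_prev_of_inKempeChain (hκ : IsEdgeColoringOn s t S κ)
    (ha : IsMissingAt s S κ a u) {f : E} (hf : f ∈ S) (hfa : κ f = a)
    (hchain : InKempeChain s t S κ a b u (s f)) :
    ∃ e ∈ S, κ e = b ∧ t e = t f ∧ InKempeChain s t S κ a b u (s e) := by
  obtain hfu | ⟨_, hprev, e, he, f', hf', rfl, heb, hef', hfa', hff'⟩ := hchain.cases_tail
  · exact absurd hfa (ha f hf hfu)
  · obtain rfl : f' = f := hκ.injOn_left hf' hf (Prod.ext hff' (hfa'.trans hfa.symm))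
    exact ⟨e, he, heb, hef', hprev⟩

theorem IsEdgeColoringOn.inKempeChain_iff (hκ : IsEdgeColoringOn s t S κ)
    (ha : IsMissingAt s S κ a u) {e f : E} (he : e ∈ S) (hf : f ∈ S)
    (hef : t e = t f) (heb : κ e = b) (hfa : κ f = a) :
    InKempeChain s t S κ a b u (s e) ↔ InKempeChain s t S κ a b u (s f) := by
  refine ⟨fun h ↦ h.tail ⟨e, he, f, hf, rfl, heb, hef, hfa, rfl⟩, fun h ↦ ?_⟩
  obtain ⟨e', he', heb', hef', hchain⟩ := hκ.exists_prev_of_inKempeChain ha hf hfa h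
  obtain rfl : e' = e :=
    hκ.injOn_right he' he (Prod.ext (hef'.trans hef.symm) (heb'.trans heb.symm))
  exact hchain

theorem IsEdgeColoringOn.swap_ne_of_inKempeChain [DecidableEq K] (hκ : IsEdgeColoringOn s t S κ)
    (ha : IsMissingAt s S κ a u) {e f : E} (he : e ∈ S) (hf : f ∈ S) (hef : t e = t f)
    (hin : InKempeChain s t S κ a b u (s e)) (hout : ¬ InKempeChain s t S κ a b u (s f)) :
    Equiv.swap a b (κ e) ≠ κ f := by
  intro hcol
  rw [Equiv.swap_apply_def] at hcol
  split_ifs at hcol with hea heb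
  · exact hout ((hκ.inKempeChain_iff ha hf he hef.symm hcol.symm hea).2 hin)
  · exact hout ((hκ.inKempeChain_iff ha he hf hef heb hcol.symm).1 hin)
  · obtain rfl := hκ.injOn_right he hf (Prod.ext hef hcol)
    exact hout hin

theorem isEdgeColoringOn_kempeSwap (hκ : IsEdgeColoringOn s t S κ)
    (ha : IsMissingAt s S κ a u) : IsEdgeColoringOn s t S (kempeSwap s t S κ a b u) := by
  classical
  constructor <;> intro e he f hf hef <;> obtain ⟨hend, hcol⟩ := Prod.mk.inj hef <;>
    unfold kempeSwap at hcol
  · refine hκ.injOn_left he hf (Prod.ext hend ?_)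
    rw [hend] at hcol
    split_ifs at hcol
    exacts [(Equiv.swap a b).injective hcol, hcol]
  · refine hκ.injOn_right he hf (Prod.ext hend ?_)
    split_ifs at hcol with he_in hf_in hf_in
    · exact (Equiv.swap a b).injective hcol
    · exact absurd hcol (hκ.swap_ne_of_inKempeChain ha he hf hend he_in hf_in)
    · exact absurd hcol.symm (hκ.swap_ne_of_inKempeChain ha hf he hend.symm hf_in he_in)
    · exact hcol

theorem isMissingAt_kempeSwap_left (ha : IsMissingAt s S κ a u) :
    IsMissingAt s S (kempeSwap s t S κ a b u) b u := by
  rintro e he rfl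
  have hin : InKempeChain s t S κ a b (s e) (s e) := Relation.ReflTransGen.refl
  simpa [kempeSwap, hin, Equiv.swap_apply_eq_iff] using ha e he rfl

theorem isMissingAt_kempeSwap_right (hκ : IsEdgeColoringOn s t S κ)
    (ha : IsMissingAt s S κ a u) (hb : IsMissingAt t S κ b v) :
    IsMissingAt t S (kempeSwap s t S κ a b u) b v := by
  intro f hf hfv hcol
  unfold kempeSwap at hcol
  split_ifs at hcol with hin
  · have hfa : κ f = a := by simpa [Equiv.swap_apply_eq_iff] using hcol
    obtain ⟨e, he, heb, hef, -⟩ := hκ.exists_prev_of_inKempeChain ha hf hfa hin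
    exact hb e he (hef.trans hfv) heb
  · exact hb f hf hfv hcol

theorem exists_isEdgeColoringOn_finset [Finite K] (hs : ∀ u, {e | s e = u}.encard ≤ ENat.card K)
    (ht : ∀ v, {e | t e = v}.encard ≤ ENat.card K) (S : Finset E) :
    ∃ κ : E → K, IsEdgeColoringOn s t S κ := by
  classical
  induction S using Finset.induction_on with
  | empty =>
    have hK (e : E) : Nonempty K := by
      have hpos : 0 < {f | s f = s e}.encard := Set.encard_pos.2 ⟨e, rfl⟩
      exact (ENat.card_pos_iff_nonempty K).1 (hpos.trans_le (hs (s e)))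
    exact ⟨fun e ↦ (hK e).some, by simp, by simp⟩
  | insert e S he ih =>
    obtain ⟨κ, hκ⟩ := ih
    have he' : e ∉ (S : Set E) := by simpa using he
    obtain ⟨a, ha⟩ := exists_isMissingAt κ (hs (s e)) he'
    obtain ⟨b, hb⟩ := exists_isMissingAt κ (ht (t e)) he'
    refine ⟨Function.update (kempeSwap s t S κ a b (s e)) e b, ?_⟩
    rw [Finset.coe_insert]
    exact (isEdgeColoringOn_kempeSwap hκ ha).insert_update he' (isMissingAt_kempeSwap_left ha)
      (isMissingAt_kempeSwap_right hκ ha hb)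

theorem exists_isEdgeColoringOn_univ [Finite K] (hs : ∀ u, {e | s e = u}.encard ≤ ENat.card K)
    (ht : ∀ v, {e | t e = v}.encard ≤ ENat.card K) :
    ∃ κ : E → K, IsEdgeColoringOn s t Set.univ κ := by
  classical
  choose g hg using exists_isEdgeColoringOn_finset hs ht
  obtain ⟨κ, hκ⟩ := Finset.rado_selection g
  have agree (e f : E) : ∃ S : Finset E, e ∈ S ∧ f ∈ S ∧ κ e = g S e ∧ κ f = g S f := by
    obtain ⟨S, hsub, hS⟩ := hκ {e, f}
    exact ⟨S, hsub (by simp), hsub (by simp), hS e (by simp), hS f (by simp)⟩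
  refine ⟨κ, fun e _ f _ hef ↦ ?_, fun e _ f _ hef ↦ ?_⟩ <;>
    obtain ⟨S, he, hf, hκe, hκf⟩ := agree e f <;>
    simp only [hκe, hκf] at hef
  exacts [(hg S).injOn_left he hf hef, (hg S).injOn_right he hf hef]

end EdgeColoring

theorem exists_perm_rows_forall_injective {J C I : Type*} [Finite C] (M : J → C → I)
    (hM : ∀ i, {jc : J × C | M jc.1 jc.2 = i}.encard ≤ ENat.card C) :
    ∃ σ : J → Equiv.Perm C, ∀ c, Function.Injective fun j ↦ M j (σ j c) := by
  have hrow (j : J) : {jc : J × C | jc.1 = j}.encard ≤ ENat.card C := by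
    rw [← Set.encard_univ]
    refine Set.encard_le_encard_of_injOn (f := Prod.snd) (Set.mapsTo_univ _ _) ?_
    exact fun x hx y hy hxy ↦ Prod.ext (hx.trans hy.symm) hxy
  obtain ⟨κ, hκ⟩ := exists_isEdgeColoringOn_univ hrow hM
  have hκrow (j : J) : Function.Bijective fun c ↦ κ (j, c) := by
    refine Finite.injective_iff_bijective.1 fun c c' hcc' ↦ ?_
    exact (Prod.mk.inj (hκ.injOn_left (Set.mem_univ (j, c)) (Set.mem_univ (j, c'))
      (Prod.ext rfl hcc'))).2
  let τ (j : J) : Equiv.Perm C := Equiv.ofBijective _ (hκrow j)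
  have hτ (j : J) (c : C) : κ (j, (τ j).symm c) = c := (τ j).apply_symm_apply c
  refine ⟨fun j ↦ (τ j).symm, fun c j j' hjj' ↦ ?_⟩
  exact (Prod.mk.inj (hκ.injOn_right (Set.mem_univ (j, (τ j).symm c))
    (Set.mem_univ (j', (τ j').symm c)) (Prod.ext hjj' ((hτ j c).trans (hτ j' c).symm)))).1

theorem stmt8_general {J C I : Type*} [Fintype C] [DecidableEq I] (M : J → C → I)
    (hM : ∀ i : I, {jc : J × C | M jc.1 jc.2 = i}.encard ≤ Fintype.card C) :
    ∃ M' : J → C → I,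
      (∀ (j : J) (i : I),
        (univ.filter fun c : C => M' j c = i).card =
          (univ.filter fun c : C => M j c = i).card) ∧
      (∀ c : C, Function.Injective fun j : J => M' j c) := by
  obtain ⟨σ, hσ⟩ := exists_perm_rows_forall_injective M (by simpa using hM)
  exact ⟨fun j c ↦ M j (σ j c), fun j i ↦ Finset.card_equiv (σ j) (by simp), hσ⟩

theorem stmt8 {J C I : Type*}
    [Fintype J] [Fintype C] [Fintype I]
    [DecidableEq J] [DecidableEq C] [DecidableEq I]
    [Nonempty J] [Nonempty C] [Nonempty I]
    (M : J → C → I)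
    (hM : ∀ i : I,
      ((univ.filter fun jc : J × C => M jc.1 jc.2 = i).card) ≤ Fintype.card C) :
    ∃ M' : J → C → I,
      -- (1) same row multisets
      (∀ (j : J) (i : I),
        (univ.filter fun c : C => M' j c = i).card =
          (univ.filter fun c : C => M j c = i).card) ∧
      -- (2) every value appears at most once in each column
      (∀ c : C, Function.Injective fun j : J => M' j c) := by
  refine stmt8_general M fun i ↦ ?_
  simpa only [← coe_filter_univ, Set.encard_coe_eq_coe_finsetCard, Nat.cast_le] using hM i
end

section
/- Let J, C, I be finite nonempty sets and let M : J × C → I be a matrix such that every value i ∈ I appears in at most |C| entries of M. Define the badness of value i as β_i(M) = |{(j,c) ∈ J×C : M(j,c) = i}| − |{c ∈ C : ∃ j ∈ J, M(j,c) = i}| and the badness of M as β(M) = Σ_{i∈I} β_i(M). If some value appears more than once in some column of M (equivalently β(M) > 0), then there exists a matrix M'' : J × C → I with the same row multisets as M (i.e., |{c : M''(j,c) = i}| = |{c : M(j,c) = i}| for all j ∈ J, i ∈ I), with every value still appearing in at most |C| entries, and with β(M'') ≤ β(M) − 1. -/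
/-!
STATEMENT 9: one step of the swapping algorithm.  The badness of a
value `i` in a matrix `M : J → C → I` is the number of entries with
value `i` minus the number of columns containing `i`; the badness of
`M` is the sum over all values.  If some value appears more than once
in some column, then there is a matrix `M''` with the same row
multisets, every value still appearing in at most `|C|` entries, and
badness at least one smaller.
-/

open Finset

/-- Badness of value `i` in matrix `M`. -/
def badnessAt {J C I : Type*} [Fintype J] [Fintype C] [DecidableEq I]
    (M : J → C → I) (i : I) : ℤ :=
  ((univ.filter fun jc : J × C => M jc.1 jc.2 = i).card : ℤ) -
    ((univ.filter fun c : C => ∃ j : J, M j c = i).card : ℤ)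

/-- Badness of matrix `M`. -/
def badness {J C I : Type*} [Fintype J] [Fintype C] [Fintype I] [DecidableEq I]
    (M : J → C → I) : ℤ :=
  ∑ i, badnessAt M i

/-!
Fix a value `i₀` repeated in a column `c₀`. Since `i₀` has at most `|C|` entries, some column `c₁`
misses it. Read the entries `M j c₀`, `M j c₁` of each row `j` as an edge of a multigraph on `I`.
Orienting the edges so that in- and out-degrees differ by at most one at every vertex amounts to
exchanging the two entries in some rows so that every value is split as evenly as possible between
the columns `c₀` and `c₁`. The badness of `i` is the sum over the columns of (multiplicity of `i`)
`- 1`, truncated at `0`, so an even split never increases it, and it strictly decreases the badness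
of `i₀`, which goes from multiplicities `(m, 0)`, `m ≥ 2`, to two positive ones.
-/

section BalancedOrientation

variable {J I : Type*} [DecidableEq I]

/-- `e` is the incidence vector of a directed edge from `a` to `b`, the vertices being the elements
of `I`; a loop has incidence vector `0`. Negating `e` reverses the edge, so an orientation of a
family of edges is a choice of signs. -/
def IsEdgeVector (e : I → ℤ) : Prop :=
  ∃ a b : I, e = Pi.single a 1 - Pi.single b 1

theorem IsEdgeVector.abs_apply_le_one {e : I → ℤ} (he : IsEdgeVector e) (v : I) : |e v| ≤ 1 := by
  obtain ⟨a, b, rfl⟩ := he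
  simp only [Pi.sub_apply, Pi.single_apply]
  split_ifs <;> simp

theorem IsEdgeVector.neg {e : I → ℤ} (he : IsEdgeVector e) : IsEdgeVector (-e) := by
  obtain ⟨a, b, rfl⟩ := he
  exact ⟨b, a, neg_sub _ _⟩

theorem IsEdgeVector.exists_units_smul_eq {e : I → ℤ} (he : IsEdgeVector e) {v : I}
    (hv : e v ≠ 0) : ∃ (u : ℤˣ) (b : I), u • e = Pi.single v 1 - Pi.single b 1 := by
  obtain ⟨a, b, rfl⟩ := he
  obtain rfl | rfl : v = a ∨ v = b := by
    by_contra! h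
    exact hv (by simp [h.1, h.2])
  · exact ⟨1, b, one_smul _ _⟩
  · exact ⟨-1, a, by rw [Units.neg_smul, one_smul, neg_sub]⟩

theorem IsEdgeVector.units_smul {e : I → ℤ} (he : IsEdgeVector e) (u : ℤˣ) :
    IsEdgeVector (u • e) := by
  obtain rfl | rfl := Int.units_eq_one_or u
  · rwa [one_smul]
  · rw [Units.neg_smul, one_smul]
    exact he.neg

/-- Two edges meeting at `v` can be oriented so that they form a path through `v`; the
incidence vector of a path is that of an edge joining its ends. -/
theorem IsEdgeVector.exists_add_units_smul {e f : I → ℤ} (he : IsEdgeVector e)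
    (hf : IsEdgeVector f) {v : I} (hev : e v ≠ 0) (hfv : f v ≠ 0) :
    ∃ u : ℤˣ, IsEdgeVector (e + u • f) := by
  obtain ⟨t, a, hea⟩ := he.exists_units_smul_eq hev
  obtain ⟨u, b, hfb⟩ := hf.exists_units_smul_eq hfv
  have path : IsEdgeVector (t • e - u • f) := ⟨b, a, by rw [hea, hfb]; abel⟩
  refine ⟨t⁻¹ * -u, ?_⟩
  convert path.units_smul t⁻¹ using 1
  rw [smul_sub, inv_smul_smul, mul_smul, Units.neg_smul, smul_neg, sub_eq_add_neg]

theorem sum_insert_update_smul {R V : Type*} [DecidableEq J] [Monoid R] [AddCommMonoid V]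
    [DistribMulAction R V] {S : Finset J} {j k : J} (hj : j ∈ S) (hk : k ∉ S) (s : J → R)
    (e : J → V) (u : R) :
    ∑ l ∈ insert k S, Function.update s k (s j * u) l • e l =
      ∑ l ∈ S, s l • Function.update e j (e j + u • e k) l := by
  have hS : ∑ l ∈ S, Function.update s k (s j * u) l • e l = ∑ l ∈ S, s l • e l :=
    sum_congr rfl fun l hl => by
      rw [Function.update_of_ne (ne_of_mem_of_not_mem hl hk)]
  have hSj : ∑ l ∈ S.erase j, s l • Function.update e j (e j + u • e k) l =
      ∑ l ∈ S.erase j, s l • e l :=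
    sum_congr rfl fun l hl => by
      rw [Function.update_of_ne (ne_of_mem_erase hl)]
  rw [sum_insert hk, hS, ← add_sum_erase S _ hj, ← add_sum_erase S _ hj, hSj,
    Function.update_self, Function.update_self, smul_add, mul_smul]
  abel

theorem exists_units_abs_sum_smul_le_one (S : Finset J) {e : J → I → ℤ}
    (he : ∀ j ∈ S, IsEdgeVector (e j)) :
    ∃ s : J → ℤˣ, ∀ v, |(∑ j ∈ S, s j • e j) v| ≤ 1 := by
  classical
  induction S using Finset.induction_on generalizing e with
  | empty => exact ⟨1, by simp⟩
  | insert k S hk ih =>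
    obtain ⟨hek, heS⟩ := (forall_mem_insert _ _ _).1 he
    by_cases hmeet : ∃ j ∈ S, ∃ v, e j v ≠ 0 ∧ e k v ≠ 0
    · obtain ⟨j, hj, v, hjv, hkv⟩ := hmeet
      -- Replace the edges `j` and `k` by the path they form; `k` inherits its orientation.
      obtain ⟨u, hu⟩ := (heS j hj).exists_add_units_smul hek hjv hkv
      have hmerged : ∀ l ∈ S, IsEdgeVector (Function.update e j (e j + u • e k) l) := by
        intro l hl
        obtain rfl | hlj := eq_or_ne l j
        · rwa [Function.update_self]
        · rw [Function.update_of_ne hlj]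
          exact heS l hl
      obtain ⟨s, hs⟩ := ih hmerged
      refine ⟨Function.update s k (s j * u), fun v => ?_⟩
      rw [sum_insert_update_smul hj hk]
      exact hs v
    · push Not at hmeet
      obtain ⟨s, hs⟩ := ih heS
      refine ⟨s, fun v => ?_⟩
      rw [sum_insert hk, Pi.add_apply]
      by_cases hkv : e k v = 0
      · simpa [Units.smul_def, hkv] using hs v
      · have hS : (∑ j ∈ S, s j • e j) v = 0 := by
          rw [Finset.sum_apply]
          exact sum_eq_zero fun j hj => by
            rw [Pi.smul_apply, not_imp_comm.1 (hmeet j hj v) hkv, smul_zero]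
        rw [hS, add_zero]
        exact (hek.units_smul (s k)).abs_apply_le_one v

theorem exists_piecewise_abs_card_sub_card_le_one [Fintype J] [DecidableEq J] (x y : J → I) :
    ∃ T : Finset J, ∀ i,
      |(#{j | T.piecewise y x j = i} : ℤ) - #{j | T.piecewise x y j = i}| ≤ 1 := by
  obtain ⟨s, hs⟩ := exists_units_abs_sum_smul_le_one univ
    (e := fun j => Pi.single (x j) 1 - Pi.single (y j) 1) fun j _ => ⟨x j, y j, rfl⟩
  refine ⟨univ.filter fun j => s j = -1, fun i => ?_⟩
  convert hs i using 2
  simp only [natCast_card_filter, ← sum_sub_distrib, Finset.sum_apply]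
  refine sum_congr rfl fun j _ => ?_
  obtain h | h := Int.units_eq_one_or (s j) <;>
    simp [h, piecewise, Pi.single_apply, eq_comm]

theorem card_piecewise_add_card_piecewise [Fintype J] [DecidableEq J] (T : Finset J)
    (x y : J → I) (i : I) :
    #{j | T.piecewise y x j = i} + #{j | T.piecewise x y j = i} =
      #{j | x j = i} + #{j | y j = i} := by
  simp only [card_filter, ← sum_add_distrib]
  refine sum_congr rfl fun j _ => ?_
  by_cases hj : j ∈ T
  · simp only [piecewise_eq_of_mem _ _ _ hj, add_comm]
  · simp only [piecewise_eq_of_notMem _ _ _ hj]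

end BalancedOrientation

section Badness

variable {J C I : Type*} [Fintype J] [Fintype C] [DecidableEq I]

theorem card_entries_eq_sum_card_row (M : J → C → I) (i : I) :
    #{jc : J × C | M jc.1 jc.2 = i} = ∑ j, #{c | M j c = i} := by
  simp only [card_filter, Fintype.sum_prod_type]

theorem card_entries_eq_sum_card_column (M : J → C → I) (i : I) :
    #{jc : J × C | M jc.1 jc.2 = i} = ∑ c, #{j | M j c = i} := by
  simp only [card_filter, Fintype.sum_prod_type_right]

-- The subtraction is truncated: a column without the value `i` contributes `0`.
theorem badnessAt_eq_sum_card_column_sub_one (M : J → C → I) (i : I) :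
    badnessAt M i = ∑ c, ((#{j | M j c = i} - 1 : ℕ) : ℤ) := by
  rw [badnessAt, card_entries_eq_sum_card_column, Nat.cast_sum, natCast_card_filter,
    ← sum_sub_distrib]
  refine sum_congr rfl fun c _ => ?_
  have hmem : (∃ j, M j c = i) ↔ 0 < #{j | M j c = i} := by
    simp [card_pos, filter_nonempty_iff]
  simp only [hmem]
  split_ifs <;> omega

theorem badnessAt_pos_iff {M : J → C → I} {i : I} :
    0 < badnessAt M i ↔ ∃ c, 1 < #{j | M j c = i} := by
  rw [badnessAt_eq_sum_card_column_sub_one, ← Nat.cast_sum, Nat.cast_pos, sum_pos_iff]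
  simp only [mem_univ, true_and, Nat.sub_pos_iff_lt]

theorem exists_badnessAt_pos_of_not_injective {M : J → C → I} {c : C}
    (hc : ¬ Function.Injective fun j => M j c) : ∃ i, 0 < badnessAt M i := by
  obtain ⟨j₁, j₂, heq, hne⟩ := Function.not_injective_iff.1 hc
  exact ⟨M j₂ c, badnessAt_pos_iff.2
    ⟨c, one_lt_card.2 ⟨j₁, by simpa using heq, j₂, by simp, hne⟩⟩⟩

theorem exists_card_column_eq_zero {M : J → C → I} {i : I}
    (hcard : #{jc : J × C | M jc.1 jc.2 = i} ≤ Fintype.card C) (hpos : 0 < badnessAt M i) :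
    ∃ c, #{j | M j c = i} = 0 := by
  by_contra! h
  have hall : ∀ c, ∃ j, M j c = i := by
    simpa [filter_eq_empty_iff] using h
  rw [badnessAt, filter_true_of_mem fun c _ => hall c, card_univ] at hpos
  omega

theorem badnessAt_sub_badnessAt_of_eq_off_pair {M N : J → C → I} {c₀ c₁ : C} (hne : c₀ ≠ c₁)
    (hoff : ∀ j c, c ≠ c₀ → c ≠ c₁ → N j c = M j c) (i : I) :
    badnessAt N i - badnessAt M i =
      (((#{j | N j c₀ = i} - 1 : ℕ) : ℤ) - (#{j | M j c₀ = i} - 1 : ℕ)) +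
        (((#{j | N j c₁ = i} - 1 : ℕ) : ℤ) - (#{j | M j c₁ = i} - 1 : ℕ)) := by
  rw [badnessAt_eq_sum_card_column_sub_one, badnessAt_eq_sum_card_column_sub_one,
    ← sum_sub_distrib]
  refine Fintype.sum_eq_add c₀ c₁ hne fun c hc => ?_
  simp only [hoff _ c hc.1 hc.2, sub_self]

end Badness

section SwapInRows

variable {J C I : Type*} [DecidableEq J] [DecidableEq C]

/-- The matrix `M` with the entries in columns `c₀` and `c₁` exchanged in the rows of `T`: the move
that makes the two columns share their values evenly. -/
def swapInRows (T : Finset J) (c₀ c₁ : C) (M : J → C → I) : J → C → I :=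
  T.piecewise (fun j c => M j (Equiv.swap c₀ c₁ c)) M

theorem swapInRows_left (T : Finset J) (c₀ c₁ : C) (M : J → C → I) (j : J) :
    swapInRows T c₀ c₁ M j c₀ = T.piecewise (M · c₁) (M · c₀) j := by
  by_cases hj : j ∈ T <;> simp [swapInRows, hj]

theorem swapInRows_right (T : Finset J) (c₀ c₁ : C) (M : J → C → I) (j : J) :
    swapInRows T c₀ c₁ M j c₁ = T.piecewise (M · c₀) (M · c₁) j := by
  by_cases hj : j ∈ T <;> simp [swapInRows, hj]

theorem swapInRows_of_ne (T : Finset J) {c₀ c₁ c : C} (M : J → C → I) (j : J) (h₀ : c ≠ c₀)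
    (h₁ : c ≠ c₁) : swapInRows T c₀ c₁ M j c = M j c := by
  by_cases hj : j ∈ T <;> simp [swapInRows, hj, Equiv.swap_apply_of_ne_of_ne h₀ h₁]

theorem card_row_swapInRows [Fintype C] [DecidableEq I] (T : Finset J) (c₀ c₁ : C)
    (M : J → C → I) (j : J) (i : I) :
    #{c | swapInRows T c₀ c₁ M j c = i} = #{c | M j c = i} := by
  by_cases hj : j ∈ T
  · simp only [swapInRows, piecewise_eq_of_mem _ _ _ hj, card_filter]
    exact Equiv.sum_comp (Equiv.swap c₀ c₁) fun c => if M j c = i then 1 else 0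
  · simp only [swapInRows, piecewise_eq_of_notMem _ _ _ hj]

theorem exists_swapInRows_balanced [Fintype J] [DecidableEq I] (c₀ c₁ : C) (M : J → C → I) :
    ∃ T : Finset J, ∀ i,
      #{j | swapInRows T c₀ c₁ M j c₀ = i} + #{j | swapInRows T c₀ c₁ M j c₁ = i} =
          #{j | M j c₀ = i} + #{j | M j c₁ = i} ∧
        |(#{j | swapInRows T c₀ c₁ M j c₀ = i} : ℤ) -
          #{j | swapInRows T c₀ c₁ M j c₁ = i}| ≤ 1 := by
  obtain ⟨T, hT⟩ := exists_piecewise_abs_card_sub_card_le_one (M · c₀) (M · c₁)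
  simp only [swapInRows_left, swapInRows_right]
  exact ⟨T, fun i => ⟨card_piecewise_add_card_piecewise T _ _ i, hT i⟩⟩

end SwapInRows

theorem stmt9_general {J C I : Type*} [Fintype J] [Fintype C] [DecidableEq I]
    (M : J → C → I) {i₀ : I}
    (hcard : #{jc : J × C | M jc.1 jc.2 = i₀} ≤ Fintype.card C)
    (hpos : 0 < badnessAt M i₀) :
    ∃ M'' : J → C → I,
      (∀ j i, #{c | M'' j c = i} = #{c | M j c = i}) ∧
      (∀ i, badnessAt M'' i ≤ badnessAt M i) ∧
      badnessAt M'' i₀ < badnessAt M i₀ := by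
  classical
  obtain ⟨c₀, hc₀⟩ := badnessAt_pos_iff.1 hpos
  obtain ⟨c₁, hc₁⟩ := exists_card_column_eq_zero hcard hpos
  have hne : c₀ ≠ c₁ := by
    rintro rfl
    omega
  obtain ⟨T, hT⟩ := exists_swapInRows_balanced c₀ c₁ M
  have hsub := badnessAt_sub_badnessAt_of_eq_off_pair hne fun j _ => swapInRows_of_ne T M j
  refine ⟨swapInRows T c₀ c₁ M, card_row_swapInRows T c₀ c₁ M, fun i => ?_, ?_⟩
  · obtain ⟨hadd, hdiff⟩ := hT i
    have := hsub i
    rw [abs_le] at hdiff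
    omega
  · obtain ⟨hadd, hdiff⟩ := hT i₀
    have := hsub i₀
    rw [abs_le] at hdiff
    omega

theorem stmt9 {J C I : Type*}
    [Fintype J] [Fintype C] [Fintype I]
    [DecidableEq J] [DecidableEq C] [DecidableEq I]
    [Nonempty J] [Nonempty C] [Nonempty I]
    (M : J → C → I)
    (hM : ∀ i : I,
      ((univ.filter fun jc : J × C => M jc.1 jc.2 = i).card) ≤ Fintype.card C)
    -- some value appears more than once in some column
    (hbad : ∃ c : C, ¬ Function.Injective fun j : J => M j c) :
    ∃ M'' : J → C → I,
      -- same row multisets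
      (∀ (j : J) (i : I),
        (univ.filter fun c : C => M'' j c = i).card =
          (univ.filter fun c : C => M j c = i).card) ∧
      -- every value still appears in at most |C| entries
      (∀ i : I,
        ((univ.filter fun jc : J × C => M'' jc.1 jc.2 = i).card) ≤ Fintype.card C) ∧
      -- the badness strictly decreases
      badness M'' ≤ badness M - 1 := by
  obtain ⟨c, hc⟩ := hbad
  obtain ⟨i₀, hpos⟩ := exists_badnessAt_pos_of_not_injective hc
  obtain ⟨M'', hrow, hle, hlt⟩ := stmt9_general M (hM i₀) hpos
  refine ⟨M'', hrow, fun i => ?_, Int.le_sub_one_of_lt ?_⟩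
  · simpa only [card_entries_eq_sum_card_row, hrow] using hM i
  · exact sum_lt_sum (fun i _ => hle i) ⟨i₀, mem_univ i₀, hlt⟩
end

section
/- If an allocation (H,p) admits a trading path, then it admits a simple trading path (with the same start and end bidders). -/
/-!
Single-valued combinatorial setting.  STATEMENT 11: if an allocation
`(H, p)` admits a trading path, then it admits a simple trading path
with the same start and end bidders.
-/

open Finset

/-- `(a, t)` is an alternating path with respect to allocation `H`
(with interest sets `S`). -/
def IsAltPath {I R : Type*} (S H : I → Finset R) (k : ℕ)
    (a : Fin (k + 1) → I) (t : Fin k → R) : Prop :=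
  ∀ s : Fin k,
    t s ∈ H (a s.castSucc) ∧ t s ∈ S (a s.succ) ∧ t s ∉ H (a s.succ)

/-- `(a, t)` is a trading path with respect to `(H, p)`:
an alternating path whose last bidder has a strictly larger valuation
than the first and a remaining budget at least the first's valuation. -/
def IsTradingPath {I R : Type*} (S H : I → Finset R)
    (v b p : I → ℝ) (k : ℕ) (a : Fin (k + 1) → I) (t : Fin k → R) : Prop :=
  IsAltPath S H k a t ∧
  v (a 0) < v (a (Fin.last k)) ∧
  v (a 0) ≤ b (a (Fin.last k)) - p (a (Fin.last k))

/-!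
Build the simple path by walking along the given one. To extend a simple path by a step through
round `r` to bidder `y`: if `y` has already been visited, go back to that visit. Otherwise cut the
path at the first bidder holding `r` and let that bidder hand `r` over to `y`; every round used
before the cut is held by an earlier bidder, hence is different from `r`.
-/

section AlternatingPaths

variable {I R : Type*} {S H : I → Finset R} {k : ℕ} {a : Fin (k + 1) → I} {t : Fin k → R}
  {y : I} {r : R}

/-- A simple alternating path: no bidder and no round occurs more than once. As in `IsAltPath`, `k`
counts the rounds, so there are `k + 1` bidders. -/
structure IsSimpleAltPath (S H : I → Finset R) (k : ℕ) (a : Fin (k + 1) → I) (t : Fin k → R) :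
    Prop where
  isAltPath : IsAltPath S H k a t
  injective_bidders : Function.Injective a
  injective_rounds : Function.Injective t

lemma isSimpleAltPath_zero (a : Fin 1 → I) (t : Fin 0 → R) : IsSimpleAltPath S H 0 a t :=
  ⟨finZeroElim, Function.injective_of_subsingleton a, Function.injective_of_subsingleton t⟩

lemma IsAltPath.init {a : Fin (k + 2) → I} {t : Fin (k + 1) → R} (h : IsAltPath S H (k + 1) a t) :
    IsAltPath S H k (Fin.init a) (Fin.init t) :=
  fun s ↦ h s.castSucc

lemma IsAltPath.take (h : IsAltPath S H k a t) (i : Fin (k + 1)) :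
    IsAltPath S H i (Fin.take (i + 1) i.isLt a) (Fin.take i i.is_le t) :=
  fun s ↦ h (s.castLE i.is_le)

lemma IsAltPath.snoc (h : IsAltPath S H k a t) (hr : r ∈ H (a (Fin.last k)))
    (hyS : r ∈ S y) (hyH : r ∉ H y) :
    IsAltPath S H (k + 1) (Fin.snoc a y : Fin (k + 2) → I) (Fin.snoc t r : Fin (k + 1) → R) := by
  intro s
  cases s using Fin.lastCases with
  | last => simpa only [Fin.snoc_castSucc, Fin.succ_last, Fin.snoc_last] using ⟨hr, hyS, hyH⟩
  | cast s => simpa only [Fin.snoc_castSucc, Fin.succ_castSucc] using h s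

namespace IsSimpleAltPath

lemma take (h : IsSimpleAltPath S H k a t) (i : Fin (k + 1)) :
    IsSimpleAltPath S H i (Fin.take (i + 1) i.isLt a) (Fin.take i i.is_le t) where
  isAltPath := h.isAltPath.take i
  injective_bidders := h.injective_bidders.comp (Fin.castLE_injective _)
  injective_rounds := h.injective_rounds.comp (Fin.castLE_injective _)

lemma snoc (h : IsSimpleAltPath S H k a t) (hr : r ∈ H (a (Fin.last k)))
    (hyS : r ∈ S y) (hyH : r ∉ H y) (hya : y ∉ Set.range a) (hrt : r ∉ Set.range t) :
    IsSimpleAltPath S H (k + 1) (Fin.snoc a y : Fin (k + 2) → I)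
      (Fin.snoc t r : Fin (k + 1) → R) where
  isAltPath := h.isAltPath.snoc hr hyS hyH
  injective_bidders := Fin.snoc_injective_of_injective h.injective_bidders hya
  injective_rounds := Fin.snoc_injective_of_injective h.injective_rounds hrt

lemma exists_extend (h : IsSimpleAltPath S H k a t) (hr : r ∈ H (a (Fin.last k)))
    (hyS : r ∈ S y) (hyH : r ∉ H y) :
    ∃ (k' : ℕ) (a' : Fin (k' + 1) → I) (t' : Fin k' → R),
      IsSimpleAltPath S H k' a' t' ∧ a' 0 = a 0 ∧ a' (Fin.last k') = y := by
  by_cases hya : y ∈ Set.range a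
  · obtain ⟨i, rfl⟩ := hya
    exact ⟨i, _, _, h.take i, rfl, rfl⟩
  · obtain ⟨i, hi, hmin⟩ :=
      wellFounded_lt.has_min {i : Fin (k + 1) | r ∈ H (a i)} ⟨Fin.last k, hr⟩
    have hya_take : y ∉ Set.range (Fin.take (i + 1) i.isLt a) :=
      fun hy ↦ hya (Set.range_comp_subset_range _ a hy)
    have hrt_take : r ∉ Set.range (Fin.take i i.is_le t) := by
      rintro ⟨s, rfl⟩
      exact hmin _ (h.isAltPath (s.castLE i.is_le)).1 s.isLt
    exact ⟨i + 1, _, _, (h.take i).snoc hi hyS hyH hya_take hrt_take,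
      Fin.snoc_apply_zero _ _, Fin.snoc_last _ _⟩

end IsSimpleAltPath

theorem IsAltPath.exists_isSimpleAltPath (h : IsAltPath S H k a t) :
    ∃ (k' : ℕ) (a' : Fin (k' + 1) → I) (t' : Fin k' → R),
      IsSimpleAltPath S H k' a' t' ∧ a' 0 = a 0 ∧ a' (Fin.last k') = a (Fin.last k) := by
  induction k with
  | zero => exact ⟨0, a, t, isSimpleAltPath_zero a t, rfl, rfl⟩
  | succ k ih =>
    obtain ⟨k', a', t', hsimple, hzero, hlast⟩ := ih h.init
    obtain ⟨hr, hyS, hyH⟩ := h (Fin.last k)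
    obtain ⟨k'', a'', t'', hsimple', hzero', hlast'⟩ :=
      hsimple.exists_extend (hlast ▸ hr) hyS hyH
    exact ⟨k'', a'', t'', hsimple', hzero'.trans hzero, hlast'⟩

lemma IsTradingPath.of_ends_eq {v b p : I → ℝ} (h : IsTradingPath S H v b p k a t)
    {k' : ℕ} {a' : Fin (k' + 1) → I} {t' : Fin k' → R} (h' : IsAltPath S H k' a' t')
    (hzero : a' 0 = a 0) (hlast : a' (Fin.last k') = a (Fin.last k)) :
    IsTradingPath S H v b p k' a' t' := by
  simpa only [IsTradingPath, hzero, hlast] using ⟨h', h.2⟩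

end AlternatingPaths

theorem stmt11_general {I R : Type*} (S H : I → Finset R) (v b p : I → ℝ)
    (k : ℕ) (a : Fin (k + 1) → I) (t : Fin k → R)
    (hpath : IsTradingPath S H v b p k a t) :
    ∃ (k' : ℕ) (a' : Fin (k' + 1) → I) (t' : Fin k' → R),
      IsTradingPath S H v b p k' a' t' ∧
      Function.Injective a' ∧ Function.Injective t' ∧
      a' 0 = a 0 ∧ a' (Fin.last k') = a (Fin.last k) := by
  obtain ⟨k', a', t', hsimple, hzero, hlast⟩ := hpath.1.exists_isSimpleAltPath
  exact ⟨k', a', t', hpath.of_ends_eq hsimple.isAltPath hzero hlast,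
    hsimple.injective_bidders, hsimple.injective_rounds, hzero, hlast⟩

theorem stmt11 {I R : Type*} [Fintype I] [DecidableEq I] [Fintype R] [DecidableEq R]
    (m : ℕ) (S H : I → Finset R) (v b p : I → ℝ)
    (hv : ∀ i, 0 < v i)
    (hHS : ∀ i, H i ⊆ S i)
    (hcap : ∀ r : R, (univ.filter fun i : I => r ∈ H i).card ≤ m)
    (hp : ∀ i, p i ≤ b i)
    (k : ℕ) (a : Fin (k + 1) → I) (t : Fin k → R)
    (hpath : IsTradingPath S H v b p k a t) :
    ∃ (k' : ℕ) (a' : Fin (k' + 1) → I) (t' : Fin k' → R),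
      IsTradingPath S H v b p k' a' t' ∧
      Function.Injective a' ∧ Function.Injective t' ∧
      a' 0 = a 0 ∧ a' (Fin.last k') = a (Fin.last k) :=
  stmt11_general S H v b p k a t hpath
end

section
/- Let H and H' be two allocations that both allocate all slots, i.e., |{i ∈ I : r ∈ H_i}| = m and |{i ∈ I : r ∈ H'_i}| = m for every round r. Then the symmetric difference of H and H' — the set of bidder–round pairs (i,r) with r ∈ (H_i \ H'_i) ∪ (H'_i \ H_i) — can be partitioned into edge-disjoint alternating walks with respect to H, i.e., walks (a_1, t_1, a_2, t_2, …, a_{j−1}, t_{j−1}, a_j) whose endpoints are bidders, such that t_k ∈ H_{a_k} \ H'_{a_k} and t_k ∈ H'_{a_{k+1}} \ H_{a_{k+1}} for all 1 ≤ k < j, with every symmetric-difference pair used exactly once across all walks. -/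
/-!
Single-valued combinatorial setting.  STATEMENT 12: if `H` and `H'`
both allocate all `m` slots of every round, then the symmetric
difference of `H` and `H'` decomposes into edge-disjoint alternating
walks with respect to `H`: walks `(a_1, t_1, …, t_{j-1}, a_j)` with
`t_k ∈ H_{a_k} \ H'_{a_k}` and `t_k ∈ H'_{a_{k+1}} \ H_{a_{k+1}}`, such
that every symmetric-difference pair is used exactly once across all
walks.
-/

open Finset

/-!
In every round `r` the bidders holding `r` under `H` and under `H'` are equally many, hence so are
those holding it only under `H` and those holding it only under `H'`. Pair these off: a bidder `i`
of the first kind matched with `i'` of the second gives the alternating walk `(i, r, i')`, and since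
the matching is a bijection these one-round walks use every pair of the symmetric difference exactly
once.
-/

section

variable {I J R α β ι : Type*}

/-- The bidder–round pairs that `H` allocates and `H'` does not. An alternating walk with respect to
`H` leaves a bidder along a pair of `surplus H H'` and enters one along a pair of `surplus H' H`.
Allocations are encoded as functions to `Set R`, which allows infinite ones. -/
def surplus (H H' : I → Set R) : Set (I × R) := {p | p.2 ∈ H p.1 \ H' p.1}

/-- The walks `(a w 0, t w 0, a w 1, …, a w (len w))`, for `w : ι`, partition the symmetric
difference of `H` and `H'` into alternating walks with respect to `H`. A pair can only be
traversed in the direction given by the side of the symmetric difference it lies on, so its being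
used exactly once is stated separately for the two sides. -/
structure IsAlternatingDecomposition (H H' : I → Set R) (len : ι → ℕ)
    (a : (w : ι) → Fin (len w + 1) → I) (t : (w : ι) → Fin (len w) → R) : Prop where
  alternating : ∀ w s,
    t w s ∈ H (a w s.castSucc) ∧ t w s ∉ H' (a w s.castSucc) ∧
      t w s ∈ H' (a w s.succ) ∧ t w s ∉ H (a w s.succ)
  existsUnique_forward : ∀ i r, r ∈ H i → r ∉ H' i →
    ∃! ws : (w : ι) × Fin (len w), a ws.1 ws.2.castSucc = i ∧ t ws.1 ws.2 = r
  existsUnique_backward : ∀ i r, r ∈ H' i → r ∉ H i →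
    ∃! ws : (w : ι) × Fin (len w), a ws.1 ws.2.succ = i ∧ t ws.1 ws.2 = r

theorem encard_sdiff_comm_of_encard_eq {s t : Set α} (hfin : (s ∩ t).Finite)
    (h : s.encard = t.encard) : (s \ t).encard = (t \ s).encard := by
  rw [← Set.encard_sdiff_add_encard_inter s t, ← Set.encard_sdiff_add_encard_inter t s,
    Set.inter_comm t s] at h
  exact ENat.add_left_injective_of_ne_top hfin.encard_lt_top.ne h

theorem nonempty_equiv_of_encard_eq {s : Set α} {t : Set β} (hs : s.Finite)
    (h : s.encard = t.encard) : Nonempty (s ≃ t) := by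
  have ht : t.Finite := Set.finite_of_encard_eq_coe (h.symm.trans hs.encard_eq_coe)
  have : Finite s := hs
  have : Finite t := ht
  exact Finite.card_eq.mp (congrArg ENat.toNat h)

theorem exists_equiv_snd_eq {A : Set (I × R)} {B : Set (J × R)}
    (h : ∀ r, Nonempty ({i | (i, r) ∈ A} ≃ {j | (j, r) ∈ B})) :
    ∃ σ : A ≃ B, ∀ p, (σ p : J × R).2 = (p : I × R).2 := by
  let e r := (h r).some
  exact ⟨{
    toFun p := ⟨(e p.1.2 ⟨p.1.1, p.2⟩, p.1.2), (e p.1.2 ⟨p.1.1, p.2⟩).2⟩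
    invFun q := ⟨((e q.1.2).symm ⟨q.1.1, q.2⟩, q.1.2), ((e q.1.2).symm ⟨q.1.1, q.2⟩).2⟩
    left_inv p := by simp
    right_inv q := by simp }, fun _ => rfl⟩

theorem existsUnique_coe_equiv_eq {A : Set α} (φ : ι ≃ A) {p : α} (hp : p ∈ A) :
    ∃! w, (φ w : α) = p := by
  simpa only [Subtype.ext_iff] using φ.bijective.existsUnique ⟨p, hp⟩

theorem existsUnique_sigma_unique {κ : ι → Type*} [∀ w, Unique (κ w)]
    {P : (w : ι) × κ w → Prop} : (∃! ws, P ws) ↔ ∃! w, P ⟨w, default⟩ :=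
  (Equiv.sigmaUnique ι κ).existsUnique_congr_left

theorem isAlternatingDecomposition_of_equiv {H H' : I → Set R} (φ : ι ≃ surplus H H')
    (σ : surplus H H' ≃ surplus H' H) (hσ : ∀ p, (σ p : I × R).2 = (p : I × R).2) :
    IsAlternatingDecomposition H H' (fun _ => 1)
      (fun w => ![(φ w : I × R).1, (σ (φ w) : I × R).1]) (fun w _ => (φ w : I × R).2) where
  alternating w s := by
    obtain rfl : s = 0 := Subsingleton.elim s 0
    have hleave : (φ w : I × R).2 ∈ H (φ w : I × R).1 \ H' (φ w : I × R).1 := (φ w).2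
    have henter : (φ w : I × R).2 ∈ H' (σ (φ w) : I × R).1 \ H (σ (φ w) : I × R).1 :=
      hσ (φ w) ▸ (σ (φ w)).2
    exact ⟨hleave.1, hleave.2, henter.1, henter.2⟩
  existsUnique_forward i r hi hi' := by
    have h : ∃! w, (φ w : I × R) = (i, r) := existsUnique_coe_equiv_eq φ ⟨hi, hi'⟩
    simp only [Prod.ext_iff] at h
    exact existsUnique_sigma_unique.mpr h
  existsUnique_backward i r hi' hi := by
    have h : ∃! w, (σ (φ w) : I × R) = (i, r) :=
      existsUnique_coe_equiv_eq (φ.trans σ) ⟨hi', hi⟩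
    simp only [Prod.ext_iff, hσ] at h
    exact existsUnique_sigma_unique.mpr h

theorem stmt12_general (H H' : I → Set R) (hfin : (surplus H H').Finite)
    (hcard : ∀ r, {i | r ∈ H i \ H' i}.encard = {i | r ∈ H' i \ H i}.encard) :
    ∃ (W : ℕ) (len : Fin W → ℕ) (a : (w : Fin W) → Fin (len w + 1) → I)
      (t : (w : Fin W) → Fin (len w) → R), IsAlternatingDecomposition H H' len a t := by
  have : Finite (surplus H H') := hfin
  obtain ⟨W, ⟨φ⟩⟩ := Finite.exists_equiv_fin (surplus H H')
  have hfiber (r : R) : {i | (i, r) ∈ surplus H H'}.Finite :=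
    hfin.preimage (Prod.mk_left_injective r).injOn
  obtain ⟨σ, hσ⟩ := exists_equiv_snd_eq (A := surplus H H') (B := surplus H' H) fun r =>
    nonempty_equiv_of_encard_eq (hfiber r) (hcard r)
  exact ⟨W, _, _, _, isAlternatingDecomposition_of_equiv φ.symm σ hσ⟩

end

theorem stmt12 {I R : Type*} [Fintype I] [DecidableEq I] [Fintype R] [DecidableEq R]
    (m : ℕ) (S : I → Finset R) (H H' : I → Finset R)
    (hHS : ∀ i, H i ⊆ S i) (hH'S : ∀ i, H' i ⊆ S i)
    (hfull : ∀ r : R, (univ.filter fun i : I => r ∈ H i).card = m)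
    (hfull' : ∀ r : R, (univ.filter fun i : I => r ∈ H' i).card = m) :
    ∃ (W : ℕ) (len : Fin W → ℕ)
      (a : (w : Fin W) → Fin (len w + 1) → I)
      (t : (w : Fin W) → Fin (len w) → R),
      -- each walk is alternating with respect to H (edges in H \ H'
      -- forward, edges in H' \ H backward)
      (∀ (w : Fin W) (s : Fin (len w)),
        t w s ∈ H (a w s.castSucc) ∧ t w s ∉ H' (a w s.castSucc) ∧
        t w s ∈ H' (a w s.succ) ∧ t w s ∉ H (a w s.succ)) ∧
      -- every pair (i, r) with r ∈ H_i \ H'_i is used exactly once as a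
      -- forward edge
      (∀ (i : I) (r : R), r ∈ H i → r ∉ H' i →
        ∃! ws : (w : Fin W) × Fin (len w),
          a ws.1 ws.2.castSucc = i ∧ t ws.1 ws.2 = r) ∧
      -- every pair (i, r) with r ∈ H'_i \ H_i is used exactly once as a
      -- backward edge
      (∀ (i : I) (r : R), r ∈ H' i → r ∉ H i →
        ∃! ws : (w : Fin W) × Fin (len w),
          a ws.1 ws.2.succ = i ∧ t ws.1 ws.2 = r) := by
  have hcard (r : R) : {i | r ∈ H i}.encard = {i | r ∈ H' i}.encard := by
    simpa [← Set.encard_coe_eq_coe_finsetCard] using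
      congrArg (Nat.cast : ℕ → ℕ∞) ((hfull r).trans (hfull' r).symm)
  obtain ⟨W, len, a, t, h⟩ := stmt12_general (fun i => (H i : Set R)) (fun i => H' i)
    (Set.toFinite _) fun r => encard_sdiff_comm_of_encard_eq (Set.toFinite _) (hcard r)
  exact ⟨W, len, a, t, h.alternating, h.existsUnique_forward, h.existsUnique_backward⟩
end

section
/- Consider any two-bidder two-item mechanism with public budgets that is incentive compatible, Pareto optimal, bidder rational, and auctioneer rational. Then on every input on which bidder 1 reports positive marginal valuations v_1(1) > 0 and v_1(2) > 0 and the mechanism assigns both items to bidder 1 (q_1 = 2), the payment of bidder 2 is p_2 = 0. -/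
/-!
Two-bidder two-item multi-unit auction with public budgets and
diminishing marginal valuations.  STATEMENT 14: for any incentive
compatible, Pareto optimal, bidder rational and auctioneer rational
mechanism, whenever bidder 1 reports positive marginal valuations and
wins both items, bidder 2 pays nothing.

A reported valuation is a pair `(v(1), v(2)) : ℝ × ℝ` with
`v(1) ≥ v(2) ≥ 0`.  The mechanism is given by the quantity function
`Q` and the payment function `P`.
-/

/-- A diminishing marginal valuation for two items. -/
def Dim (v : ℝ × ℝ) : Prop := 0 ≤ v.2 ∧ v.2 ≤ v.1

/-- Total value of receiving `q` items under marginal valuation `v`. -/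
def val2 (v : ℝ × ℝ) (q : ℕ) : ℝ :=
  match q with
  | 0 => 0
  | 1 => v.1
  | _ => v.1 + v.2

/-!
A bidder's payment depends only on the quantity he receives, once the other report is fixed. So a
losing bidder 2 pays what he would pay with the zero report. Against the zero report, Pareto
optimality gives everything to any bidder 1 who values every item, however little; such a bidder 1
never pays more than his value, so the price of the whole supply is at most every `ε > 0`.
Bidder 1 thus pays at most `0` against the zero report, auctioneer rationality forces bidder 2's
payment to be at least `0`, and bidder rationality forces it to be at most `0`.
-/

section IncentiveCompatibility

variable {V A R : Type*}

/-- Incentive compatibility on the set `D` of admissible reports, for a single bidder facing fixed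
reports of the others: reporting `v` he receives `q v` and pays `p v`, and `val v a` is his value
for `a` when his true valuation is `v`. -/
def IncentiveCompatibleOn [Sub R] [LE R] (val : V → A → R) (D : Set V) (q : V → A)
    (p : V → R) : Prop :=
  ∀ v ∈ D, ∀ v' ∈ D, val v (q v') - p v' ≤ val v (q v) - p v

namespace IncentiveCompatibleOn

section PartialOrder

variable [AddCommGroup R] [PartialOrder R] [IsOrderedAddMonoid R]
  {val : V → A → R} {D : Set V} {q : V → A} {p : V → R} {v w : V}

theorem payment_le (h : IncentiveCompatibleOn val D q p) (hv : v ∈ D) (hw : w ∈ D)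
    (hq : q v = q w) : p v ≤ p w := by
  simpa only [hq, sub_le_sub_iff_left] using h v hv w hw

theorem payment_eq (h : IncentiveCompatibleOn val D q p) (hv : v ∈ D) (hw : w ∈ D)
    (hq : q v = q w) : p v = p w :=
  (h.payment_le hv hw hq).antisymm (h.payment_le hw hv hq.symm)

end PartialOrder

theorem payment_nonpos [AddCommGroup R] [LinearOrder R] [IsOrderedAddMonoid R]
    {val : V → A → R} {D : Set V} {q : V → A} {p : V → R} {v : V}
    (h : IncentiveCompatibleOn val D q p) (hBR : ∀ w ∈ D, 0 ≤ val w (q w) - p w) (hv : v ∈ D)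
    (hsmall : ∀ ε > 0, ∃ w ∈ D, q w = q v ∧ val w (q v) < ε) : p v ≤ 0 := by
  refine le_of_forall_gt fun ε hε => ?_
  obtain ⟨w, hw, hq, hlt⟩ := hsmall ε hε
  calc p v ≤ p w := h.payment_le hv hw hq.symm
    _ ≤ val w (q w) := sub_nonneg.mp (hBR w hw)
    _ < ε := hq ▸ hlt

end IncentiveCompatibleOn

end IncentiveCompatibility

section ParetoOptimality

variable {R : Type*}

/-- Pareto efficiency, between the two bidders and at unchanged payments, of an allocation of `m`
items; `uᵢ n` is bidder `i`'s value for `n` items. -/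
def IsParetoAllocation [Preorder R] (m : ℕ) (u₁ u₂ : ℕ → R) (q : ℕ × ℕ) : Prop :=
  MaximalFor (fun a : ℕ × ℕ => a.1 + a.2 ≤ m) (fun a => (u₁ a.1, u₂ a.2)) q

theorem IsParetoAllocation.eq_of_forall_lt [Preorder R] {m : ℕ} {u₁ u₂ : ℕ → R} {q : ℕ × ℕ}
    (h : IsParetoAllocation m u₁ u₂ q) (hu₁ : ∀ n < m, u₁ n < u₁ m) (hu₂ : ∀ n, u₂ n ≤ u₂ 0) :
    q = (m, 0) := by
  have hq : q.1 + q.2 ≤ m := h.prop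
  have hfst : q.1 = m := by
    by_contra hne
    have hlt : u₁ q.1 < u₁ m := hu₁ q.1 (by omega)
    exact hlt.not_ge (h.2 (j := (m, 0)) le_rfl ⟨hlt.le, hu₂ q.2⟩).1
  exact Prod.ext hfst (by simp only; omega)

/-- Pareto optimality of the outcome `(q, p)` among the allocations of `m` items with payments
within the budgets `b₁` and `b₂`, where `uᵢ n` is bidder `i`'s value for `n` items and the
auctioneer's utility is his revenue. Feasibility of `(q, p)` itself is not included. -/
def IsParetoOptimal [AddGroup R] [Preorder R] (m : ℕ) (b₁ b₂ : R) (u₁ u₂ : ℕ → R) (q : ℕ × ℕ)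
    (p : R × R) : Prop :=
  ¬ ∃ (q' : ℕ × ℕ) (p' : R × R),
    q'.1 + q'.2 ≤ m ∧ p'.1 ≤ b₁ ∧ p'.2 ≤ b₂ ∧
    u₁ q.1 - p.1 ≤ u₁ q'.1 - p'.1 ∧ u₂ q.2 - p.2 ≤ u₂ q'.2 - p'.2 ∧ p.1 + p.2 ≤ p'.1 + p'.2 ∧
    (u₁ q.1 - p.1 < u₁ q'.1 - p'.1 ∨ u₂ q.2 - p.2 < u₂ q'.2 - p'.2 ∨ p.1 + p.2 < p'.1 + p'.2)

theorem IsParetoOptimal.isParetoAllocation [AddCommGroup R] [PartialOrder R]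
    [IsOrderedAddMonoid R] {m : ℕ} {b₁ b₂ : R} {u₁ u₂ : ℕ → R} {q : ℕ × ℕ} {p : R × R}
    (h : IsParetoOptimal m b₁ b₂ u₁ u₂ q p) (hfeas : q.1 + q.2 ≤ m ∧ p.1 ≤ b₁ ∧ p.2 ≤ b₂) :
    IsParetoAllocation m u₁ u₂ q := by
  refine ⟨hfeas.1, fun q' hq' hle => ?_⟩
  by_contra hnot
  have hlt : u₁ q.1 < u₁ q'.1 ∨ u₂ q.2 < u₂ q'.2 :=
    (not_and_or.mp hnot).imp (lt_of_le_not_ge hle.1) (lt_of_le_not_ge hle.2)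
  exact h ⟨q', p, hq', hfeas.2.1, hfeas.2.2, sub_le_sub_right hle.1 _, sub_le_sub_right hle.2 _,
    le_rfl, hlt.imp (sub_lt_sub_right · _) fun h₂ => .inl (sub_lt_sub_right h₂ _)⟩

end ParetoOptimality

theorem val2_zero_valuation (n : ℕ) : val2 (0, 0) n = 0 := by
  unfold val2
  split <;> simp only [add_zero]

theorem val2_lt_val2_two {v : ℝ × ℝ} (h₁ : 0 < v.1) (h₂ : 0 < v.2) : ∀ n < 2, val2 v n < val2 v 2
  | 0, _ => add_pos h₁ h₂
  | 1, _ => lt_add_of_pos_right v.1 h₂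

theorem exists_dim_val2_two_lt {ε : ℝ} (hε : 0 < ε) :
    ∃ w, Dim w ∧ (∀ n < 2, val2 w n < val2 w 2) ∧ val2 w 2 < ε := by
  have hpos : 0 < ε / 4 := by positivity
  refine ⟨(ε / 4, ε / 4), ⟨hpos.le, le_rfl⟩, val2_lt_val2_two hpos hpos, ?_⟩
  change ε / 4 + ε / 4 < ε
  linarith

theorem stmt14_general {V₁ V₂ R : Type*} [AddCommGroup R] [LinearOrder R] [IsOrderedAddMonoid R]
    {m : ℕ} {val₁ : V₁ → ℕ → R} {val₂ : V₂ → ℕ → R} {D₁ : Set V₁} {D₂ : Set V₂}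
    {Q : V₁ → V₂ → ℕ × ℕ} {P : V₁ → V₂ → R × R}
    (hBR : ∀ v₁ ∈ D₁, ∀ v₂ ∈ D₂,
      0 ≤ val₁ v₁ (Q v₁ v₂).1 - (P v₁ v₂).1 ∧ 0 ≤ val₂ v₂ (Q v₁ v₂).2 - (P v₁ v₂).2)
    (hAR : ∀ v₁ ∈ D₁, ∀ v₂ ∈ D₂, 0 ≤ (P v₁ v₂).1 + (P v₁ v₂).2)
    (hIC₁ : ∀ v₂ ∈ D₂,
      IncentiveCompatibleOn val₁ D₁ (fun v₁ => (Q v₁ v₂).1) (fun v₁ => (P v₁ v₂).1))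
    (hIC₂ : ∀ v₁ ∈ D₁,
      IncentiveCompatibleOn val₂ D₂ (fun v₂ => (Q v₁ v₂).2) (fun v₂ => (P v₁ v₂).2))
    (hPA : ∀ v₁ ∈ D₁, ∀ v₂ ∈ D₂, IsParetoAllocation m (val₁ v₁) (val₂ v₂) (Q v₁ v₂))
    {z : V₂} (hz : z ∈ D₂) (hz_le : ∀ n, val₂ z n ≤ val₂ z 0)
    (hsmall : ∀ ε > 0, ∃ w ∈ D₁, (∀ n < m, val₁ w n < val₁ w m) ∧ val₁ w m < ε)
    {v₁ : V₁} {v₂ : V₂} (hv₁ : v₁ ∈ D₁) (hv₂ : v₂ ∈ D₂)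
    (hlt : ∀ n < m, val₁ v₁ n < val₁ v₁ m) (hnone : val₂ v₂ 0 = 0) (hwin : (Q v₁ v₂).1 = m) :
    (P v₁ v₂).2 = 0 := by
  have wins_all : ∀ w ∈ D₁, (∀ n < m, val₁ w n < val₁ w m) → Q w z = (m, 0) :=
    fun w hw hlt => (hPA w hw z hz).eq_of_forall_lt hlt hz_le
  have hQz : Q v₁ z = (m, 0) := wins_all v₁ hv₁ hlt
  have hloses : (Q v₁ v₂).2 = 0 := by
    have hq : (Q v₁ v₂).1 + (Q v₁ v₂).2 ≤ m := (hPA v₁ hv₁ v₂ hv₂).prop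
    omega
  have hP₁ : (P v₁ z).1 ≤ 0 := by
    refine (hIC₁ z hz).payment_nonpos (fun w hw => (hBR w hw z hz).1) hv₁ fun ε hε => ?_
    obtain ⟨w, hw, hw_lt, hwε⟩ := hsmall ε hε
    exact ⟨w, hw, by simp only [wins_all w hw hw_lt, hQz], by simpa only [hQz] using hwε⟩
  have hP₂ : (P v₁ v₂).2 = (P v₁ z).2 :=
    (hIC₂ v₁ hv₁).payment_eq hv₂ hz (by simp only [hloses, hQz])
  apply le_antisymm
  · simpa only [hloses, hnone, sub_nonneg] using (hBR v₁ hv₁ v₂ hv₂).2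
  · calc 0 ≤ (P v₁ z).1 + (P v₁ z).2 := hAR v₁ hv₁ z hz
      _ ≤ (P v₁ z).2 := add_le_of_nonpos_left hP₁
      _ = (P v₁ v₂).2 := hP₂.symm

theorem stmt14 (b1 b2 : ℝ) (hb1 : 0 < b1) (hb2 : 0 < b2)
    (Q : ℝ × ℝ → ℝ × ℝ → ℕ × ℕ) (P : ℝ × ℝ → ℝ × ℝ → ℝ × ℝ)
    -- the mechanism always outputs a feasible outcome
    (hfeas : ∀ v1 v2, Dim v1 → Dim v2 →
      (Q v1 v2).1 + (Q v1 v2).2 ≤ 2 ∧ (P v1 v2).1 ≤ b1 ∧ (P v1 v2).2 ≤ b2)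
    -- bidder rationality
    (hBR : ∀ v1 v2, Dim v1 → Dim v2 →
      0 ≤ val2 v1 (Q v1 v2).1 - (P v1 v2).1 ∧
      0 ≤ val2 v2 (Q v1 v2).2 - (P v1 v2).2)
    -- auctioneer rationality
    (hAR : ∀ v1 v2, Dim v1 → Dim v2 → 0 ≤ (P v1 v2).1 + (P v1 v2).2)
    -- incentive compatibility for bidder 1
    (hIC1 : ∀ v1 v1' v2, Dim v1 → Dim v1' → Dim v2 →
      val2 v1 (Q v1' v2).1 - (P v1' v2).1 ≤ val2 v1 (Q v1 v2).1 - (P v1 v2).1)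
    -- incentive compatibility for bidder 2
    (hIC2 : ∀ v1 v2 v2', Dim v1 → Dim v2 → Dim v2' →
      val2 v2 (Q v1 v2').2 - (P v1 v2').2 ≤ val2 v2 (Q v1 v2).2 - (P v1 v2).2)
    -- Pareto optimality of every produced outcome
    (hPO : ∀ v1 v2, Dim v1 → Dim v2 →
      ¬ ∃ (q' : ℕ × ℕ) (p' : ℝ × ℝ),
        q'.1 + q'.2 ≤ 2 ∧ p'.1 ≤ b1 ∧ p'.2 ≤ b2 ∧
        val2 v1 (Q v1 v2).1 - (P v1 v2).1 ≤ val2 v1 q'.1 - p'.1 ∧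
        val2 v2 (Q v1 v2).2 - (P v1 v2).2 ≤ val2 v2 q'.2 - p'.2 ∧
        (P v1 v2).1 + (P v1 v2).2 ≤ p'.1 + p'.2 ∧
        (val2 v1 (Q v1 v2).1 - (P v1 v2).1 < val2 v1 q'.1 - p'.1 ∨
         val2 v2 (Q v1 v2).2 - (P v1 v2).2 < val2 v2 q'.2 - p'.2 ∨
         (P v1 v2).1 + (P v1 v2).2 < p'.1 + p'.2))
    -- the input: bidder 1 has positive marginal valuations and wins both items
    (v1 v2 : ℝ × ℝ) (hd1 : Dim v1) (hd2 : Dim v2)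
    (hpos1 : 0 < v1.1) (hpos2 : 0 < v1.2)
    (hwin : (Q v1 v2).1 = 2) :
    (P v1 v2).2 = 0 :=
  stmt14_general (D₁ := {v | Dim v}) (D₂ := {v | Dim v})
    (fun v₁ h₁ v₂ h₂ => hBR v₁ v₂ h₁ h₂) (fun v₁ h₁ v₂ h₂ => hAR v₁ v₂ h₁ h₂)
    (fun v₂ h₂ v₁ h₁ v₁' h₁' => hIC1 v₁ v₁' v₂ h₁ h₁' h₂)
    (fun v₁ h₁ v₂ h₂ v₂' h₂' => hIC2 v₁ v₂ v₂' h₁ h₂ h₂')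
    (fun v₁ h₁ v₂ h₂ => IsParetoOptimal.isParetoAllocation (hPO v₁ v₂ h₁ h₂) (hfeas v₁ v₂ h₁ h₂))
    (z := (0, 0)) ⟨le_rfl, le_rfl⟩ (fun n => (val2_zero_valuation n).le)
    (fun _ => exists_dim_val2_two_lt) hd1 hd2 (val2_lt_val2_two hpos1 hpos2) rfl hwin
end

section
/- Consider any two-bidder mechanism for |R| identical items with public budgets that is incentive compatible, Pareto optimal, bidder rational, and auctioneer rational. Then on every input on which the reported diminishing marginal valuations satisfy v_1(|R|) > v_2(1) and Σ_{j=1}^{|R|} v_2(j) ≤ b_1, the mechanism assigns all |R| items to bidder 1 (q_1 = |R|). -/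
/-!
Two-bidder multi-unit auction for `R ≥ 1` identical items with public
budgets and diminishing marginal valuations.  STATEMENT 15: for any
incentive compatible, Pareto optimal, bidder rational and auctioneer
rational mechanism, whenever the reports satisfy `v1(R) > v2(1)` and
`Σ_{j=1}^{R} v2(j) ≤ b1`, all `R` items are assigned to bidder 1.

A reported valuation is a function `v : ℕ → ℝ` whose values on
`{1, …, R}` are nonincreasing and nonnegative.
-/

open Finset

/-- `v` is a diminishing (nonincreasing, nonnegative) marginal
valuation for `R` items. -/
def DimR (R : ℕ) (v : ℕ → ℝ) : Prop :=
  (∀ k : ℕ, 1 ≤ k → k < R → v (k + 1) ≤ v k) ∧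
  (∀ k : ℕ, 1 ≤ k → k ≤ R → 0 ≤ v k)

/-- Total value of receiving `q` items under marginal valuation `v`. -/
def valR (v : ℕ → ℝ) (q : ℕ) : ℝ := ∑ k ∈ Finset.Icc 1 q, v k

/-!
Suppose bidder 2 wins `s ≥ 1` items. Pareto optimality forbids selling his last item to bidder 1 at
the price `v₂ s`, so bidder 1 must be short of money: he pays more than `b₁ - v₂ s`. If moreover
bidder 2 has no value for more than `s` items, then bidder 1 could win his `R - s` items with an
arbitrarily small report, so incentive compatibility makes him pay at most zero. Together,
`b₁ < v₂ s`. For a general `v₂`, let bidder 2 instead report `v₂ + d`, cut off after `s` items: weak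
monotonicity makes him win `s` items again, so `b₁ < v₂ s + d`, and `d → 0` gives `b₁ ≤ v₂ s`.
This is impossible if `v₂ 1 < b₁`. If instead the marginals of bidder 2 sum to at most `b₁`, then
those after `v₂ s` vanish, and the strict bound `b₁ < v₂ s` applies to `v₂` itself.
-/

section Valuations

variable {R : ℕ} {v v₁ v₂ : ℕ → ℝ}

lemma valR_succ (v : ℕ → ℝ) (n : ℕ) : valR v (n + 1) = valR v n + v (n + 1) :=
  sum_Icc_succ_top (by omega) v

lemma valR_add_sum_Ioc (v : ℕ → ℝ) {a b : ℕ} (hab : a ≤ b) :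
    valR v a + ∑ j ∈ Ioc a b, v j = valR v b :=
  sum_Ioc_consecutive v a.zero_le hab

lemma valR_const (c : ℝ) (n : ℕ) : valR (fun _ ↦ c) n = n * c := by
  simp [valR]

lemma valR_add_const (v : ℕ → ℝ) (d : ℝ) (n : ℕ) :
    valR (fun j ↦ v j + d) n = valR v n + n * d := by
  simp [valR, sum_add_distrib]

/-- The valuation `v` cut off after `s` items: further items are worth nothing. It encodes a report
by which a bidder asks for at most `s` items. -/
def truncate (s : ℕ) (v : ℕ → ℝ) : ℕ → ℝ := fun j ↦ if j ≤ s then v j else 0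

lemma valR_truncate (s : ℕ) (v : ℕ → ℝ) (n : ℕ) : valR (truncate s v) n = valR v (min n s) := by
  have hfilter : (Icc 1 n).filter (· ≤ s) = Icc 1 (min n s) := by grind
  simp only [valR, truncate, ← sum_filter, hfilter]

namespace DimR

lemma le_of_le (hv : DimR R v) {i j : ℕ} (hi : 1 ≤ i) (hij : i ≤ j) (hj : j ≤ R) : v j ≤ v i := by
  induction j, hij using Nat.le_induction with
  | base => exact le_rfl
  | succ n hin ih => exact (hv.1 n (hi.trans hin) hj).trans (ih (by omega))

lemma lt_of_first_lt_last (hv₁ : DimR R v₁) (hv₂ : DimR R v₂) (hgt : v₂ 1 < v₁ R) {i j : ℕ}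
    (hi : i ∈ Icc 1 R) (hj : j ∈ Icc 1 R) : v₂ i < v₁ j := by
  rw [mem_Icc] at hi hj
  calc v₂ i ≤ v₂ 1 := hv₂.le_of_le le_rfl hi.1 hi.2
    _ < v₁ R := hgt
    _ ≤ v₁ j := hv₁.le_of_le hj.1 hj.2 le_rfl

lemma const {c : ℝ} (hc : 0 ≤ c) : DimR R fun _ ↦ c :=
  ⟨fun _ _ _ ↦ le_rfl, fun _ _ _ ↦ hc⟩

lemma add_const (hv : DimR R v) {d : ℝ} (hd : 0 ≤ d) : DimR R fun j ↦ v j + d :=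
  ⟨fun k hk hkR ↦ add_le_add_left (hv.1 k hk hkR) d, fun k hk hkR ↦ add_nonneg (hv.2 k hk hkR) hd⟩

lemma truncate (hv : DimR R v) (s : ℕ) : DimR R (truncate s v) := by
  refine ⟨fun k hk hkR ↦ ?_, fun k hk hkR ↦ ?_⟩ <;> unfold _root_.truncate
  · have := hv.1 k hk hkR
    have := hv.2 k hk hkR.le
    split_ifs <;> first | omega | linarith
  · split_ifs
    exacts [hv.2 k hk hkR, le_rfl]

end DimR

end Valuations

section Outcomes

variable {R : ℕ} {b₁ b₂ : ℝ} {v₁ v₂ : ℕ → ℝ} {q : ℕ × ℕ} {p : ℝ × ℝ}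

/-- The quantities `q` and payments `p` form an outcome of the auction: at most `R` items are sold
and both budgets are respected. Payments may be negative. -/
def Feasible (R : ℕ) (b₁ b₂ : ℝ) (q : ℕ × ℕ) (p : ℝ × ℝ) : Prop :=
  q.1 + q.2 ≤ R ∧ p.1 ≤ b₁ ∧ p.2 ≤ b₂

/-- Pareto optimality of the outcome `(q, p)` at the valuations `v₁`, `v₂`: no feasible outcome is
at least as good for the two bidders and the auctioneer and strictly better for one of the three. -/
def ParetoOptimal (R : ℕ) (b₁ b₂ : ℝ) (v₁ v₂ : ℕ → ℝ) (q : ℕ × ℕ) (p : ℝ × ℝ) : Prop :=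
  ¬ ∃ (q' : ℕ × ℕ) (p' : ℝ × ℝ),
    q'.1 + q'.2 ≤ R ∧ p'.1 ≤ b₁ ∧ p'.2 ≤ b₂ ∧
    valR v₁ q.1 - p.1 ≤ valR v₁ q'.1 - p'.1 ∧
    valR v₂ q.2 - p.2 ≤ valR v₂ q'.2 - p'.2 ∧
    p.1 + p.2 ≤ p'.1 + p'.2 ∧
    (valR v₁ q.1 - p.1 < valR v₁ q'.1 - p'.1 ∨
     valR v₂ q.2 - p.2 < valR v₂ q'.2 - p'.2 ∨
     p.1 + p.2 < p'.1 + p'.2)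

namespace ParetoOptimal

lemma sub_le_fst (hPO : ParetoOptimal R b₁ b₂ v₁ v₂ q p) (hf : Feasible R b₁ b₂ q p) {t : ℕ}
    (hpos : ∀ j ∈ Ioc q.1 (R - t), 0 < v₁ j) (hzero : ∀ j ∈ Ioc t q.2, v₂ j = 0) :
    R - t ≤ q.1 := by
  by_contra! hlt
  obtain ⟨-, hp₁, hp₂⟩ := hf
  have hgain : valR v₁ q.1 < valR v₁ (R - t) := by
    rw [← valR_add_sum_Ioc v₁ hlt.le]
    exact lt_add_of_pos_right _ (sum_pos hpos (nonempty_Ioc.2 hlt))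
  have hsame : valR v₂ (min q.2 t) = valR v₂ q.2 := by
    rcases le_total q.2 t with h | h
    · rw [min_eq_left h]
    · rw [min_eq_right h, ← valR_add_sum_Ioc v₂ h, sum_eq_zero hzero, add_zero]
  refine hPO ⟨(R - t, min q.2 t), p, ?_, hp₁, hp₂, ?_, ?_, le_rfl, Or.inl ?_⟩ <;> dsimp only
  · omega
  · exact sub_le_sub_right hgain.le _
  · rw [hsame]
  · exact sub_lt_sub_right hgain _

lemma budget_lt_payment_add (hPO : ParetoOptimal R b₁ b₂ v₁ v₂ q p) (hf : Feasible R b₁ b₂ q p)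
    (hq₂ : 1 ≤ q.2) (hnonneg : 0 ≤ v₂ q.2) (hlt : v₂ q.2 < v₁ (q.1 + 1)) :
    b₁ < p.1 + v₂ q.2 := by
  by_contra! hafford
  obtain ⟨hR, -, hp₂⟩ := hf
  have hgain := valR_succ v₁ q.1
  have hloss := valR_succ v₂ (q.2 - 1)
  rw [Nat.sub_add_cancel hq₂] at hloss
  -- Bidder 2 sells his last item to bidder 1 at the price `v₂ q.2`.
  refine hPO ⟨(q.1 + 1, q.2 - 1), (p.1 + v₂ q.2, p.2 - v₂ q.2), ?_, hafford, ?_, ?_, ?_, ?_,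
    Or.inl ?_⟩ <;> dsimp only
  · omega
  all_goals linarith

end ParetoOptimal

end Outcomes

section Mechanisms

/-- The mechanism with allocation rule `Q` and payment rule `P` produces feasible Pareto optimal
outcomes, is incentive compatible for both bidders, and is individually rational for bidder 1. All
conditions concern reports that are diminishing marginal valuations. -/
structure IsAdmissible (R : ℕ) (b₁ b₂ : ℝ) (Q : (ℕ → ℝ) → (ℕ → ℝ) → ℕ × ℕ)
    (P : (ℕ → ℝ) → (ℕ → ℝ) → ℝ × ℝ) : Prop where
  feasible : ∀ v₁ v₂, DimR R v₁ → DimR R v₂ → Feasible R b₁ b₂ (Q v₁ v₂) (P v₁ v₂)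
  rational_fst : ∀ v₁ v₂, DimR R v₁ → DimR R v₂ → 0 ≤ valR v₁ (Q v₁ v₂).1 - (P v₁ v₂).1
  incentive_fst : ∀ v₁ v₁' v₂, DimR R v₁ → DimR R v₁' → DimR R v₂ →
    valR v₁ (Q v₁' v₂).1 - (P v₁' v₂).1 ≤ valR v₁ (Q v₁ v₂).1 - (P v₁ v₂).1
  incentive_snd : ∀ v₁ v₂ v₂', DimR R v₁ → DimR R v₂ → DimR R v₂' →
    valR v₂ (Q v₁ v₂').2 - (P v₁ v₂').2 ≤ valR v₂ (Q v₁ v₂).2 - (P v₁ v₂).2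
  pareto : ∀ v₁ v₂, DimR R v₁ → DimR R v₂ → ParetoOptimal R b₁ b₂ v₁ v₂ (Q v₁ v₂) (P v₁ v₂)

variable {R : ℕ} {b₁ b₂ : ℝ} {Q : (ℕ → ℝ) → (ℕ → ℝ) → ℕ × ℕ} {P : (ℕ → ℝ) → (ℕ → ℝ) → ℝ × ℝ}
  {v₁ v₂ w : ℕ → ℝ}

namespace IsAdmissible

lemma weak_monotone_snd (hM : IsAdmissible R b₁ b₂ Q P) (hv₁ : DimR R v₁) (hv₂ : DimR R v₂)
    (hw : DimR R w) :
    valR v₂ (Q v₁ w).2 + valR w (Q v₁ v₂).2 ≤ valR v₂ (Q v₁ v₂).2 + valR w (Q v₁ w).2 := by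
  linarith [hM.incentive_snd v₁ v₂ w hv₁ hv₂ hw, hM.incentive_snd v₁ w v₂ hv₁ hw hv₂]

lemma snd_le_snd_truncate_add (hM : IsAdmissible R b₁ b₂ Q P) (hv₁ : DimR R v₁) (hv₂ : DimR R v₂)
    {d : ℝ} (hd : 0 < d) :
    (Q v₁ v₂).2 ≤ (Q v₁ (truncate (Q v₁ v₂).2 fun j ↦ v₂ j + d)).2 := by
  have hmono := hM.weak_monotone_snd hv₁ hv₂ ((hv₂.add_const hd.le).truncate (Q v₁ v₂).2)
  by_contra! hlt
  simp only [valR_truncate, min_self, min_eq_left hlt.le, valR_add_const] at hmono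
  have : _ * d < _ * d := mul_lt_mul_of_pos_right (Nat.cast_lt.2 hlt) hd
  linarith

lemma payment_fst_le_mul (hM : IsAdmissible R b₁ b₂ Q P) (hv₁ : DimR R v₁) (hv₂ : DimR R v₂)
    (hzero : ∀ j ∈ Ioc (R - (Q v₁ v₂).1) R, v₂ j = 0) {ε : ℝ} (hε : 0 < ε) :
    (P v₁ v₂).1 ≤ (Q v₁ v₂).1 * ε := by
  set n := (Q v₁ v₂).1
  set w := truncate n fun _ ↦ ε with hw_def
  have hw : DimR R w := (DimR.const hε.le).truncate n
  have hf := hM.feasible v₁ v₂ hv₁ hv₂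
  have hfw := hM.feasible w v₂ hw hv₂
  have hwins : n ≤ (Q w v₂).1 := by
    rw [← Nat.sub_sub_self (show n ≤ R from le_of_add_le_left hf.1)]
    refine (hM.pareto w v₂ hw hv₂).sub_le_fst hfw (fun j hj ↦ ?_) fun j hj ↦ hzero j ?_
    · have hjn : j ≤ n := by grind
      simpa only [hw_def, truncate, if_pos hjn] using hε
    · have := hfw.1
      grind
  have hvalue : valR v₁ n ≤ valR v₁ (Q w v₂).1 := by
    rw [← valR_add_sum_Ioc v₁ hwins]
    refine le_add_of_nonneg_right (sum_nonneg fun j hj ↦ hv₁.2 j ?_ ?_)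
    all_goals
      have := hfw.1
      grind
  calc (P v₁ v₂).1 ≤ (P w v₂).1 := by linarith [hM.incentive_fst v₁ w v₂ hv₁ hw hv₂]
    _ ≤ valR w (Q w v₂).1 := sub_nonneg.1 (hM.rational_fst w v₂ hw hv₂)
    _ = n * ε := by rw [hw_def, valR_truncate, min_eq_right hwins, valR_const]

lemma payment_fst_nonpos (hM : IsAdmissible R b₁ b₂ Q P) (hv₁ : DimR R v₁) (hv₂ : DimR R v₂)
    (hzero : ∀ j ∈ Ioc (R - (Q v₁ v₂).1) R, v₂ j = 0) : (P v₁ v₂).1 ≤ 0 := by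
  by_contra! hpos
  obtain ⟨ε, hε, hlt⟩ := exists_pos_mul_lt hpos (Q v₁ v₂).1
  exact hlt.not_ge (hM.payment_fst_le_mul hv₁ hv₂ hzero hε)

lemma sub_le_fst (hM : IsAdmissible R b₁ b₂ Q P) (hv₁ : DimR R v₁) (hv₂ : DimR R v₂)
    (hgt : v₂ 1 < v₁ R) {t : ℕ} (hzero : ∀ j ∈ Ioc t (Q v₁ v₂).2, v₂ j = 0) :
    R - t ≤ (Q v₁ v₂).1 := by
  refine (hM.pareto v₁ v₂ hv₁ hv₂).sub_le_fst (hM.feasible v₁ v₂ hv₁ hv₂) (fun j hj ↦ ?_) hzero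
  have hj' : j ∈ Icc 1 R := by grind
  exact (hv₂.2 j (mem_Icc.1 hj').1 (mem_Icc.1 hj').2).trans_lt
    (hv₁.lt_of_first_lt_last hv₂ hgt hj' hj')

lemma fst_add_snd_eq (hM : IsAdmissible R b₁ b₂ Q P) (hv₁ : DimR R v₁) (hv₂ : DimR R v₂)
    (hgt : v₂ 1 < v₁ R) : (Q v₁ v₂).1 + (Q v₁ v₂).2 = R := by
  have hfst : R - (Q v₁ v₂).2 ≤ (Q v₁ v₂).1 := hM.sub_le_fst hv₁ hv₂ hgt (by simp)
  have := (hM.feasible v₁ v₂ hv₁ hv₂).1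
  omega

lemma budget_lt_marginal_snd (hM : IsAdmissible R b₁ b₂ Q P) (hv₁ : DimR R v₁)
    (hv₂ : DimR R v₂) (hgt : v₂ 1 < v₁ R) (hwin : 1 ≤ (Q v₁ v₂).2)
    (hzero : ∀ j ∈ Ioc (Q v₁ v₂).2 R, v₂ j = 0) : b₁ < v₂ (Q v₁ v₂).2 := by
  have hsum := hM.fst_add_snd_eq hv₁ hv₂ hgt
  have hshort : b₁ < (P v₁ v₂).1 + v₂ (Q v₁ v₂).2 :=
    (hM.pareto v₁ v₂ hv₁ hv₂).budget_lt_payment_add (hM.feasible v₁ v₂ hv₁ hv₂) hwin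
      (hv₂.2 _ hwin (by omega))
      (hv₁.lt_of_first_lt_last hv₂ hgt (mem_Icc.2 (by omega)) (mem_Icc.2 (by omega)))
  have hpay : (P v₁ v₂).1 ≤ 0 := hM.payment_fst_nonpos hv₁ hv₂ fun j hj ↦ hzero j (by grind)
  linarith

lemma budget_lt_marginal_snd_add (hM : IsAdmissible R b₁ b₂ Q P) (hv₁ : DimR R v₁) (hv₂ : DimR R v₂)
    (hwin : 1 ≤ (Q v₁ v₂).2) {d : ℝ} (hd : 0 < d) (hgt : v₂ 1 + d < v₁ R) :
    b₁ < v₂ (Q v₁ v₂).2 + d := by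
  set s := (Q v₁ v₂).2
  set w := truncate s fun j ↦ v₂ j + d
  have hw : DimR R w := (hv₂.add_const hd.le).truncate s
  have hw_le : ∀ j ≤ s, w j = v₂ j + d := fun j hj ↦ if_pos hj
  have hw_gt : ∀ j, s < j → w j = 0 := fun j hj ↦ if_neg hj.not_ge
  have hgt_w : w 1 < v₁ R := by rwa [hw_le 1 hwin]
  have hs : (Q v₁ w).2 = s := by
    refine le_antisymm ?_ (hM.snd_le_snd_truncate_add hv₁ hv₂ hd)
    have hfst : R - s ≤ (Q v₁ w).1 :=
      hM.sub_le_fst hv₁ hw hgt_w fun j hj ↦ hw_gt j (mem_Ioc.1 hj).1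
    have hs_le : s ≤ R := le_of_add_le_right (hM.feasible v₁ v₂ hv₁ hv₂).1
    have := (hM.feasible v₁ w hv₁ hw).1
    omega
  have hlt := hM.budget_lt_marginal_snd hv₁ hw hgt_w (hs ▸ hwin)
    fun j hj ↦ hw_gt j (hs ▸ (mem_Ioc.1 hj).1)
  rwa [hs, hw_le s le_rfl] at hlt

lemma budget_le_marginal_snd (hM : IsAdmissible R b₁ b₂ Q P) (hv₁ : DimR R v₁) (hv₂ : DimR R v₂)
    (hgt : v₂ 1 < v₁ R) (hwin : 1 ≤ (Q v₁ v₂).2) : b₁ ≤ v₂ (Q v₁ v₂).2 := by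
  by_contra! hlt
  obtain ⟨d, hd, hd_lt⟩ := exists_between (lt_min (sub_pos.2 hlt) (sub_pos.2 hgt))
  obtain ⟨hd_budget, hd_gap⟩ := lt_min_iff.1 hd_lt
  linarith [hM.budget_lt_marginal_snd_add hv₁ hv₂ hwin hd (by linarith)]

end IsAdmissible

theorem stmt15_general (hM : IsAdmissible R b₁ b₂ Q P) (hv₁ : DimR R v₁) (hv₂ : DimR R v₂)
    (hgt : v₂ 1 < v₁ R) (hbudget : v₂ 1 < b₁ ∨ valR v₂ R ≤ b₁) : (Q v₁ v₂).1 = R := by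
  have hsum := hM.fst_add_snd_eq hv₁ hv₂ hgt
  by_contra hne
  have hwin : 1 ≤ (Q v₁ v₂).2 := by omega
  set s := (Q v₁ v₂).2
  have hle : b₁ ≤ v₂ s := hM.budget_le_marginal_snd hv₁ hv₂ hgt hwin
  rcases hbudget with hone | htotal
  · exact (hone.trans_le hle).not_ge (hv₂.le_of_le le_rfl hwin (by omega))
  · have hnonneg : ∀ j ∈ Icc 1 R, 0 ≤ v₂ j := fun j hj ↦
      hv₂.2 j (mem_Icc.1 hj).1 (mem_Icc.1 hj).2
    have hs : s ∈ Icc 1 R := mem_Icc.2 (by omega)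
    have hzero : ∀ j ∈ Ioc s R, v₂ j = 0 := fun j hj ↦ by
      have hj' : j ∈ Icc 1 R := by grind
      have hpair : v₂ s + v₂ j ≤ valR v₂ R :=
        add_le_sum hnonneg hs hj' (mem_Ioc.1 hj).1.ne
      linarith [hnonneg j hj']
    have hlt : b₁ < v₂ s := hM.budget_lt_marginal_snd hv₁ hv₂ hgt hwin hzero
    have hsingle : v₂ s ≤ valR v₂ R := single_le_sum hnonneg hs
    linarith

end Mechanisms

theorem stmt15 (R : ℕ) (hR : 1 ≤ R) (b1 b2 : ℝ) (hb1 : 0 < b1) (hb2 : 0 < b2)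
    (Q : (ℕ → ℝ) → (ℕ → ℝ) → ℕ × ℕ) (P : (ℕ → ℝ) → (ℕ → ℝ) → ℝ × ℝ)
    -- the mechanism always outputs a feasible outcome
    (hfeas : ∀ v1 v2, DimR R v1 → DimR R v2 →
      (Q v1 v2).1 + (Q v1 v2).2 ≤ R ∧ (P v1 v2).1 ≤ b1 ∧ (P v1 v2).2 ≤ b2)
    -- bidder rationality
    (hBR : ∀ v1 v2, DimR R v1 → DimR R v2 →
      0 ≤ valR v1 (Q v1 v2).1 - (P v1 v2).1 ∧
      0 ≤ valR v2 (Q v1 v2).2 - (P v1 v2).2)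
    -- auctioneer rationality
    (hAR : ∀ v1 v2, DimR R v1 → DimR R v2 → 0 ≤ (P v1 v2).1 + (P v1 v2).2)
    -- incentive compatibility for bidder 1
    (hIC1 : ∀ v1 v1' v2, DimR R v1 → DimR R v1' → DimR R v2 →
      valR v1 (Q v1' v2).1 - (P v1' v2).1 ≤ valR v1 (Q v1 v2).1 - (P v1 v2).1)
    -- incentive compatibility for bidder 2
    (hIC2 : ∀ v1 v2 v2', DimR R v1 → DimR R v2 → DimR R v2' →
      valR v2 (Q v1 v2').2 - (P v1 v2').2 ≤ valR v2 (Q v1 v2).2 - (P v1 v2).2)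
    -- Pareto optimality of every produced outcome
    (hPO : ∀ v1 v2, DimR R v1 → DimR R v2 →
      ¬ ∃ (q' : ℕ × ℕ) (p' : ℝ × ℝ),
        q'.1 + q'.2 ≤ R ∧ p'.1 ≤ b1 ∧ p'.2 ≤ b2 ∧
        valR v1 (Q v1 v2).1 - (P v1 v2).1 ≤ valR v1 q'.1 - p'.1 ∧
        valR v2 (Q v1 v2).2 - (P v1 v2).2 ≤ valR v2 q'.2 - p'.2 ∧
        (P v1 v2).1 + (P v1 v2).2 ≤ p'.1 + p'.2 ∧
        (valR v1 (Q v1 v2).1 - (P v1 v2).1 < valR v1 q'.1 - p'.1 ∨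
         valR v2 (Q v1 v2).2 - (P v1 v2).2 < valR v2 q'.2 - p'.2 ∨
         (P v1 v2).1 + (P v1 v2).2 < p'.1 + p'.2))
    -- the input
    (v1 v2 : ℕ → ℝ) (hd1 : DimR R v1) (hd2 : DimR R v2)
    (hgt : v2 1 < v1 R)
    (hbudget : ∑ j ∈ Finset.Icc 1 R, v2 j ≤ b1) :
    (Q v1 v2).1 = R :=
  stmt15_general ⟨hfeas, fun u1 u2 hu1 hu2 ↦ (hBR u1 u2 hu1 hu2).1, hIC1, hIC2, hPO⟩ hd1 hd2 hgt
    (.inr hbudget)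
end
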